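/- Let n ≥ 2, m > 1 and δ > 1/2. There exists a constant C > 0 such that for all ζ ∈ ℂ∖ℝ and all Schwartz functions f, g on ℝⁿ, |( |p′(D_x)| (ζ − p(D_x))^{-1} f , g )_{L²(ℝⁿ)}| ≤ C ‖⟨x⟩^{δ} f‖_{L²(ℝⁿ)} ‖⟨x⟩^{δ} g‖_{L²(ℝⁿ)}; in particular the supremum over ζ ∈ ℂ∖ℝ of the left-hand side is finite and bounded by the right-hand side. -/

import Mathlib

open MeasureTheory Real Complex RealInnerProductSpace

noncomputable section

/-- Fourier transform with convention `(2π)^(-n/2) ∫ e^(-ix·ξ) f(x) dx`. -/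
def FT (n : ℕ) (f : EuclideanSpace ℝ (Fin n) → ℂ) (ξ : EuclideanSpace ℝ (Fin n)) : ℂ :=
  ((2 * π) ^ (-(n : ℝ) / 2) : ℝ) •
    ∫ x : EuclideanSpace ℝ (Fin n), Complex.exp (-Complex.I * ((⟪x, ξ⟫ : ℝ) : ℂ)) * f x

/-- Inverse Fourier transform. -/
def IFT (n : ℕ) (F : EuclideanSpace ℝ (Fin n) → ℂ) (x : EuclideanSpace ℝ (Fin n)) : ℂ :=
  ((2 * π) ^ (-(n : ℝ) / 2) : ℝ) •
    ∫ ξ : EuclideanSpace ℝ (Fin n), Complex.exp (Complex.I * ((⟪x, ξ⟫ : ℝ) : ℂ)) * F ξ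

/-- Fourier multiplier with symbol `q`: `q(D_x) f = IFT (q · FT f)`. -/
def mult (n : ℕ) (q : EuclideanSpace ℝ (Fin n) → ℂ) (f : EuclideanSpace ℝ (Fin n) → ℂ) :
    EuclideanSpace ℝ (Fin n) → ℂ :=
  IFT n fun ξ => q ξ * FT n f ξ

/-!
Freeze the component of `ξ` orthogonal to a direction `e`. A symbol whose restrictions to the lines
parallel to `e` have uniformly bounded Fourier transforms defines a form bounded by
`‖⟨x⟩^δ f‖ ‖⟨x⟩^δ g‖`: apply Plancherel in the orthogonal variables and use that `⟨t⟩^(-δ)` is in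
`L²(ℝ)` for `δ > 1/2`.

By homogeneity the resolvent at `ζ` is a dilation, which preserves such bounds, of the resolvent at
`ζ / ‖ζ‖`. The latter is singular only near the shell `1/2 ≤ p ≤ 2`, where Euler's identity shows
that `p` increases along radial directions `e`; the restriction to a line is then compared with the
model `(iε - d u)⁻¹`, whose Fourier transform is bounded uniformly in `ε`. Away from the shell the
symbol is at most `A / ‖ξ‖`; cut off to a cone `2 ⟪e, ξ⟫² ≤ ‖ξ‖²`, it has uniformly bounded
integrals along the lines parallel to `e`, and two such cones cover the space.
-/

open Set Topology
open scoped FourierTransform SchwartzMap ENNReal NNReal ComplexConjugate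

section FourierTransform

variable {V : Type*} [NormedAddCommGroup V] [InnerProductSpace ℝ V] [FiniteDimensional ℝ V]
  [MeasurableSpace V] [BorelSpace V]

theorem norm_fourier_le_integral_norm (f : V → ℂ) (ξ : V) : ‖𝓕 f ξ‖ ≤ ∫ x, ‖f x‖ :=
  VectorFourier.norm_fourierIntegral_le_integral_norm _ _ _ _ _

theorem fourier_const_mul (c : ℂ) (f : V → ℂ) (ξ : V) : 𝓕 (fun x => c * f x) ξ = c * 𝓕 f ξ :=
  congrFun (VectorFourier.fourierIntegral_const_smul _ _ _ f c) ξ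

theorem norm_fourier_comp_sub_right (f : V → ℂ) (a ξ : V) :
    ‖𝓕 (fun x => f (x - a)) ξ‖ = ‖𝓕 f ξ‖ := by
  have h := VectorFourier.fourierIntegral_comp_add_right 𝐞 volume (innerₗ V) f (-a)
  simp only [Function.comp_def, ← sub_eq_add_neg] at h
  exact (congrArg norm (congrFun h ξ)).trans (Circle.norm_smul _ _)

theorem norm_fourier_le_add_integral {q q₀ : V → ℂ} {h : V → ℝ} (hq : Integrable q)
    (hq₀ : Integrable q₀) (hh : Integrable h) (hle : ∀ x, ‖q x - q₀ x‖ ≤ h x) (ξ : V) :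
    ‖𝓕 q ξ‖ ≤ ‖𝓕 q₀ ξ‖ + ∫ x, h x := by
  have hadd := VectorFourier.fourierIntegral_add (L := innerₗ V) continuous_fourierChar
    continuous_inner hq₀ (hq.sub hq₀)
  rw [add_sub_cancel] at hadd
  calc ‖𝓕 q ξ‖ = ‖𝓕 q₀ ξ + 𝓕 (q - q₀) ξ‖ := congrArg norm (congrFun hadd ξ)
    _ ≤ ‖𝓕 q₀ ξ‖ + ∫ x, ‖q x - q₀ x‖ :=
        (norm_add_le _ _).trans (by gcongr; exact norm_fourier_le_integral_norm _ ξ)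
    _ ≤ ‖𝓕 q₀ ξ‖ + ∫ x, h x := by
        gcongr
        exacts [(hq.sub hq₀).norm, hle]

theorem continuous_fourier {f : V → ℂ} (hf : Integrable f) : Continuous (𝓕 f) :=
  VectorFourier.fourierIntegral_continuous continuous_fourierChar continuous_inner hf

theorem integrable_mul_fourier {q h : V → ℂ} (hq : Integrable q) (hh : Integrable h) :
    Integrable fun ξ => q ξ * 𝓕 h ξ :=
  hq.mul_bdd (continuous_fourier hh).aestronglyMeasurable
    (.of_forall (norm_fourier_le_integral_norm h))

theorem fourier_modulation (q : V → ℂ) (x t : V) :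
    𝓕 (fun ξ => (𝐞 (-⟪ξ, x⟫) : ℂ) * q ξ) t = 𝓕 q (x + t) := by
  rw [fourier_eq, fourier_eq]
  refine integral_congr_ae (.of_forall fun ξ => ?_)
  simp only [Circle.smul_def, smul_eq_mul, inner_add_right, neg_add, AddChar.map_add_eq_mul,
    Circle.coe_mul]
  ring

theorem fourier_mul_fourier {q h : V → ℂ} (hq : Integrable q) (hh : Integrable h) (x : V) :
    𝓕 (fun ξ => q ξ * 𝓕 h ξ) x = ∫ t, h t * 𝓕 q (x + t) := by
  have hqx : Integrable fun ξ => (𝐞 (-⟪ξ, x⟫) : ℂ) * q ξ :=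
    (fourierIntegral_convergent_iff x).2 hq
  have hflip := VectorFourier.integral_fourierIntegral_smul_eq_flip (L := innerₗ V)
    continuous_fourierChar continuous_inner hh hqx
  rw [flip_innerₗ] at hflip
  calc 𝓕 (fun ξ => q ξ * 𝓕 h ξ) x = ∫ ξ, 𝓕 h ξ * ((𝐞 (-⟪ξ, x⟫) : ℂ) * q ξ) := by
        rw [fourier_eq]
        refine integral_congr_ae (.of_forall fun ξ => ?_)
        simp only [Circle.smul_def, smul_eq_mul]
        ring
    _ = ∫ t, h t * 𝓕 (fun ξ => (𝐞 (-⟪ξ, x⟫) : ℂ) * q ξ) t := hflip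
    _ = ∫ t, h t * 𝓕 q (x + t) := by simp_rw [fourier_modulation]

theorem norm_fourier_mul_fourier_le {q h : V → ℂ} {K : ℝ} (hq : Integrable q) (hh : Integrable h)
    (hK : ∀ t, ‖𝓕 q t‖ ≤ K) (x : V) : ‖𝓕 (fun ξ => q ξ * 𝓕 h ξ) x‖ ≤ K * ∫ t, ‖h t‖ := by
  rw [fourier_mul_fourier hq hh, mul_comm, ← integral_mul_const]
  refine norm_integral_le_of_norm_le (hh.norm.mul_const K) (.of_forall fun t => ?_)
  rw [norm_mul]
  gcongr
  exact hK _

theorem integral_mul_conj_fourier {F g : V → ℂ} (hF : Integrable F) (hg : Integrable g) :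
    ∫ ξ, F ξ * conj (𝓕 g ξ) = ∫ x, 𝓕⁻ F x * conj (g x) := by
  have h := VectorFourier.integral_sesq_fourierIntegral_eq_neg_flip (L := innerₗ V) (innerSL ℂ)
    continuous_fourierChar continuous_inner hg hF
  rw [flip_innerₗ] at h
  simp only [innerSL_apply_apply, RCLike.inner_apply] at h
  exact h

theorem norm_integral_mul_fourier_mul_conj_fourier_le {q u v : V → ℂ} {K : ℝ}
    (hq : Integrable q) (hu : Integrable u) (hv : Integrable v) (hK : ∀ x, ‖𝓕 q x‖ ≤ K) :
    ‖∫ ξ, q ξ * 𝓕 u ξ * conj (𝓕 v ξ)‖ ≤ K * (∫ x, ‖u x‖) * ∫ x, ‖v x‖ := by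
  rw [integral_mul_conj_fourier (integrable_mul_fourier hq hu) hv,
    ← integral_const_mul]
  refine norm_integral_le_of_norm_le (hv.norm.const_mul _) (.of_forall fun x => ?_)
  rw [norm_mul, RCLike.norm_conj, fourierInv_eq_fourier_neg]
  gcongr
  exact norm_fourier_mul_fourier_le hq hu hK _

theorem lintegral_enorm_fourier_sq (f : 𝓢(V, ℂ)) :
    ∫⁻ ξ, ‖𝓕 (f : V → ℂ) ξ‖ₑ ^ 2 = ∫⁻ x, ‖f x‖ₑ ^ 2 := by
  have h (g : 𝓢(V, ℂ)) : ∫⁻ x, ‖g x‖ₑ ^ 2 = ENNReal.ofReal (∫ x, ‖g x‖ ^ 2) := by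
    rw [ofReal_integral_eq_lintegral_ofReal ((g.memLp 2 volume).integrable_norm_pow two_ne_zero)
      (.of_forall fun x => by positivity)]
    simp [ENNReal.ofReal_pow]
  rw [← SchwartzMap.fourier_coe, h, h, SchwartzMap.integral_norm_sq_fourier]

end FourierTransform

section GaussianResolvent

/-- The model singularity `(iε - d u)⁻¹` of a resolvent along a line on which the symbol has slope
`d`, regularised at infinity by the Gaussian that is its own Fourier transform. -/
def gaussianResolvent (d ε u : ℝ) : ℂ :=
  cexp (-π * u ^ 2) * (I * ε - d * u)⁻¹

theorem norm_cexp_neg_pi_mul_sq (u : ℝ) : ‖cexp (-π * u ^ 2)‖ = rexp (-π * u ^ 2) := by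
  rw [← Complex.norm_of_nonneg (exp_pos (-π * u ^ 2)).le]
  norm_cast

theorem integrable_cexp_neg_pi_mul_sq : Integrable fun u : ℝ => cexp (-π * u ^ 2) := by
  exact_mod_cast (integrable_exp_neg_mul_sq pi_pos).ofReal (𝕜 := ℂ)

theorem integral_exp_neg_pi_mul_sq : ∫ u : ℝ, rexp (-π * u ^ 2) = 1 := by
  rw [integral_gaussian, div_self pi_ne_zero, Real.sqrt_one]

theorem fourier_cexp_neg_pi_mul_sq :
    𝓕 (fun u : ℝ => cexp (-π * u ^ 2)) = fun u : ℝ => cexp (-π * u ^ 2) := by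
  simpa using fourier_gaussian_pi (b := 1) (by simp)

theorem one_sub_exp_neg_pi_mul_sq_le (u : ℝ) : 1 - rexp (-π * u ^ 2) ≤ π * |u| := by
  rcases le_total |u| 1 with h | h
  · calc 1 - rexp (-π * u ^ 2) ≤ π * (|u| * |u|) := by
          rw [abs_mul_abs_self]
          linarith [Real.add_one_le_exp (-π * u ^ 2)]
      _ ≤ π * |u| := by gcongr; exact mul_le_of_le_one_left (abs_nonneg u) h
  · nlinarith [exp_pos (-π * u ^ 2), pi_gt_three]

theorem integrable_gaussianResolvent (d : ℝ) {ε : ℝ} (hε : ε ≠ 0) :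
    Integrable (gaussianResolvent d ε) := by
  have him (u : ℝ) : (I * ε - d * u : ℂ).im = ε := by simp
  have hne (u : ℝ) : (I * ε - d * u : ℂ) ≠ 0 := fun h => hε (by simpa [h] using (him u).symm)
  refine integrable_cexp_neg_pi_mul_sq.mul_bdd (c := |ε|⁻¹)
    (Continuous.inv₀ (by fun_prop) hne).aestronglyMeasurable (.of_forall fun u => ?_)
  rw [norm_inv]
  exact inv_anti₀ (abs_pos.2 hε) (by simpa only [him] using abs_im_le_norm (I * ε - d * u))

/-- A one-sided decaying exponential, the inverse Fourier transform of `(2πi)⁻¹ (u - iη)⁻¹`. -/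
def oneSidedExp (η : ℝ) : ℝ → ℂ :=
  (Ioi 0).indicator fun t => cexp (-(2 * π * η) * t)

theorem norm_oneSidedExp_le_one {η : ℝ} (hη : 0 < η) (t : ℝ) : ‖oneSidedExp η t‖ ≤ 1 := by
  refine (norm_indicator_eq_indicator_norm _ t).trans_le (indicator_le' (fun t ht => ?_)
    (fun _ _ => zero_le_one) t)
  rw [Complex.norm_exp, Real.exp_le_one_iff]
  have : 0 < π * η * t := mul_pos (mul_pos pi_pos hη) ht
  norm_cast
  linarith

theorem integrable_oneSidedExp {η : ℝ} (hη : 0 < η) : Integrable (oneSidedExp η) := by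
  rw [oneSidedExp, integrable_indicator_iff measurableSet_Ioi]
  exact integrableOn_exp_mul_complex_Ioi (by simpa using by positivity) 0

theorem fourier_oneSidedExp {η : ℝ} (hη : 0 < η) (u : ℝ) :
    𝓕 (oneSidedExp η) u = (2 * π * (η + I * u))⁻¹ := by
  have hre : (-(2 * π * (η + I * u)) : ℂ).re < 0 := by simpa using by positivity
  calc 𝓕 (oneSidedExp η) u = ∫ t in Ioi (0 : ℝ), cexp (-(2 * π * (η + I * u)) * t) := by
        rw [fourier_real_eq_integral_exp_smul, ← integral_indicator measurableSet_Ioi]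
        refine integral_congr_ae (.of_forall fun t => ?_)
        simp only [oneSidedExp, indicator_apply, smul_eq_mul, mul_ite, mul_zero, ← Complex.exp_add]
        congr 2
        push_cast
        ring
    _ = (2 * π * (η + I * u))⁻¹ := by
        rw [integral_exp_mul_complex_Ioi hre]
        simp [neg_div_neg_eq]

theorem gaussianResolvent_eq_mul_fourier {d ε : ℝ} (hd : 0 < d) (hε : 0 < ε) (u : ℝ) :
    gaussianResolvent d ε u =
      (-(2 * π / d * I)) * (cexp (-π * u ^ 2) * 𝓕 (oneSidedExp (ε / d)) u) := by
  have : (ε / d + I * u : ℂ) ≠ 0 := fun h =>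
    (div_pos hε hd).ne' (by simpa [← ofReal_div] using congrArg Complex.re h)
  have hd' : (d : ℂ) ≠ 0 := ofReal_ne_zero.2 hd.ne'
  have hslope : (I * ε - d * u : ℂ) = d * I * (ε / d + I * u) := by
    field_simp
    linear_combination (-(d * u) : ℂ) * I_sq
  rw [fourier_oneSidedExp (div_pos hε hd), gaussianResolvent, hslope]
  push_cast
  field_simp
  simp [neg_div]

theorem norm_fourier_gaussianResolvent_le_of_pos {d ε : ℝ} (hd : 0 < d) (hε : 0 < ε) (x : ℝ) :
    ‖𝓕 (gaussianResolvent d ε) x‖ ≤ 2 * π / d := by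
  have hη : 0 < ε / d := div_pos hε hd
  have hmodel : ‖𝓕 (fun u : ℝ => cexp (-π * u ^ 2) * 𝓕 (oneSidedExp (ε / d)) u) x‖ ≤ 1 := by
    rw [fourier_mul_fourier integrable_cexp_neg_pi_mul_sq (integrable_oneSidedExp hη),
      fourier_cexp_neg_pi_mul_sq, ← integral_exp_neg_pi_mul_sq,
      ← integral_add_left_eq_self (fun u : ℝ => rexp (-π * u ^ 2)) x]
    refine norm_integral_le_of_norm_le
      ((integrable_exp_neg_mul_sq pi_pos).comp_add_left x) (.of_forall fun t => ?_)
    rw [norm_mul, norm_cexp_neg_pi_mul_sq]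
    exact mul_le_of_le_one_left (exp_pos _).le (norm_oneSidedExp_le_one hη t)
  rw [funext (gaussianResolvent_eq_mul_fourier hd hε), fourier_const_mul, norm_mul]
  simpa [abs_of_pos hd, abs_of_pos pi_pos] using
    mul_le_mul_of_nonneg_left hmodel (div_pos two_pi_pos hd).le

theorem norm_fourier_gaussianResolvent_le {d ε : ℝ} (hd : 0 < d) (hε : ε ≠ 0) (x : ℝ) :
    ‖𝓕 (gaussianResolvent d ε) x‖ ≤ 2 * π / d := by
  rcases hε.lt_or_gt with h | h
  · have hreflect : gaussianResolvent d ε =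
        fun u => -1 * (gaussianResolvent d (-ε) ∘ LinearIsometryEquiv.neg ℝ) u := by
      ext u
      have hneg : (I * -ε - d * -u : ℂ) = -(I * ε - d * u) := by ring
      simp only [gaussianResolvent, Function.comp_apply, LinearIsometryEquiv.coe_neg, ofReal_neg,
        neg_sq, hneg, inv_neg]
      ring
    rw [hreflect, fourier_const_mul, fourier_comp_linearIsometry, neg_one_mul, norm_neg]
    exact norm_fourier_gaussianResolvent_le_of_pos hd (neg_pos.2 h) _
  · exact norm_fourier_gaussianResolvent_le_of_pos hd h x

end GaussianResolvent

section NondegeneratePhase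

/-- The function `φ` has slope at least `c > 0` and an `M`-Lipschitz derivative on `[α, β]`; it is
the restriction of a symbol to a line crossing its level sets transversally. -/
structure IsNondegeneratePhase (φ : ℝ → ℝ) (α β c : ℝ) (M : ℝ≥0) : Prop where
  slope_pos : 0 < c
  differentiableAt : ∀ s ∈ Icc α β, DifferentiableAt ℝ φ s
  le_deriv : ∀ s ∈ Icc α β, c ≤ deriv φ s
  lipschitzOnWith : LipschitzOnWith M (deriv φ) (Icc α β)

namespace IsNondegeneratePhase

variable {φ : ℝ → ℝ} {α β c : ℝ} {M : ℝ≥0}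

theorem continuousOn (h : IsNondegeneratePhase φ α β c M) : ContinuousOn φ (Icc α β) :=
  fun s hs => (h.differentiableAt s hs).continuousAt.continuousWithinAt

theorem mul_abs_sub_le (h : IsNondegeneratePhase φ α β c M) {s t : ℝ} (hs : s ∈ Icc α β)
    (ht : t ∈ Icc α β) : c * |s - t| ≤ |φ s - φ t| := by
  wlog hst : s ≤ t generalizing s t
  · rw [abs_sub_comm s, abs_sub_comm (φ s)]
    exact this ht hs (le_of_not_ge hst)
  have hslope : c * (t - s) ≤ φ t - φ s :=
    (convex_Icc α β).mul_sub_le_image_sub_of_le_deriv h.continuousOn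
      (fun u hu => (h.differentiableAt u (interior_subset hu)).differentiableWithinAt)
      (fun u hu => h.le_deriv u (interior_subset hu)) s hs t ht hst
  rw [abs_sub_comm s, abs_sub_comm (φ s), abs_of_nonneg (sub_nonneg.2 hst)]
  exact hslope.trans (le_abs_self _)

theorem abs_sub_taylor_le (h : IsNondegeneratePhase φ α β c M) {s s₀ : ℝ} (hs : s ∈ Icc α β)
    (hs₀ : s₀ ∈ Icc α β) : |φ s - φ s₀ - deriv φ s₀ * (s - s₀)| ≤ M * |s - s₀| ^ 2 := by
  have hsub : uIcc s₀ s ⊆ Icc α β := uIcc_subset_Icc hs₀ hs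
  have hderiv (t : ℝ) (ht : t ∈ uIcc s₀ s) : HasDerivWithinAt
      (fun t => φ t - deriv φ s₀ * t) (deriv φ t - deriv φ s₀) (uIcc s₀ s) t := by
    exact (((h.differentiableAt t (hsub ht)).hasDerivAt.sub
      ((hasDerivAt_id t).const_mul (deriv φ s₀))).congr_deriv (by rw [mul_one])).hasDerivWithinAt
  have hbound (t : ℝ) (ht : t ∈ uIcc s₀ s) : ‖deriv φ t - deriv φ s₀‖ ≤ M * |s - s₀| := by
    refine (h.lipschitzOnWith.norm_sub_le (hsub ht) hs₀).trans ?_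
    gcongr
    exact abs_sub_left_of_mem_uIcc ht
  calc |φ s - φ s₀ - deriv φ s₀ * (s - s₀)|
      = ‖(φ s - deriv φ s₀ * s) - (φ s₀ - deriv φ s₀ * s₀)‖ := by
        rw [Real.norm_eq_abs]; congr 1; ring
    _ ≤ M * |s - s₀| * ‖s - s₀‖ := (convex_uIcc s₀ s).norm_image_sub_le_of_norm_hasDerivWithin_le
        hderiv hbound left_mem_uIcc right_mem_uIcc
    _ = M * |s - s₀| ^ 2 := by rw [Real.norm_eq_abs]; ring

/-- The point `s₀` is where `φ` comes closest to `σ` on `[α, β]`. -/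
theorem exists_resonant_point (h : IsNondegeneratePhase φ α β c M) (hαβ : α ≤ β) (σ : ℝ) :
    ∃ s₀ ∈ Icc α β, (∀ s ∈ Icc α β, c * |s - s₀| ≤ |σ - φ s|) ∧ (φ s₀ = σ ∨ s₀ ∉ Ioo α β) := by
  have hα : α ∈ Icc α β := left_mem_Icc.2 hαβ
  have hβ : β ∈ Icc α β := right_mem_Icc.2 hαβ
  have hmono : StrictMonoOn φ (Icc α β) := strictMonoOn_of_deriv_pos (convex_Icc α β)
    h.continuousOn fun s hs => h.slope_pos.trans_le (h.le_deriv s (interior_subset hs))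
  have hends : φ α ≤ φ β := hmono.monotoneOn hα hβ hαβ
  obtain ⟨s₀, hs₀, hproj⟩ :=
    intermediate_value_Icc hαβ h.continuousOn (projIcc (φ α) (φ β) hends σ).2
  refine ⟨s₀, hs₀, fun s hs => ?_, or_iff_not_imp_right.2 fun hmem => ?_⟩
  · have hφs : φ s ∈ Icc (φ α) (φ β) :=
      ⟨hmono.monotoneOn hα hs hs.1, hmono.monotoneOn hs hβ hs.2⟩
    calc c * |s - s₀| ≤ |φ s - φ s₀| := h.mul_abs_sub_le hs hs₀
      _ = |(projIcc _ _ hends σ : ℝ) - projIcc _ _ hends (φ s)| := by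
        rw [hproj, projIcc_of_mem hends hφs, abs_sub_comm]
      _ ≤ |σ - φ s| := abs_projIcc_sub_projIcc hends
  · rw [not_not] at hmem
    have hlo : φ α < φ s₀ := hmono hα hs₀ hmem.1
    have hhi : φ s₀ < φ β := hmono hs₀ hβ hmem.2
    rw [hproj, coe_projIcc] at hlo hhi ⊢
    grind

end IsNondegeneratePhase

theorem sub_ofReal_ne_zero {ζ : ℂ} (hζ : ζ.im ≠ 0) (r : ℝ) : ζ - r ≠ 0 :=
  fun h => hζ (by simpa using congrArg Complex.im h)

theorem integrable_mul_resolvent {φ b : ℝ → ℝ} {α β : ℝ} (hφ : ContinuousOn φ (Icc α β))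
    (hb : Continuous b) (hsupp : ∀ s ∉ Ioo α β, b s = 0) {ζ : ℂ} (hζ : ζ.im ≠ 0) :
    Integrable fun s : ℝ => (b s : ℂ) * (ζ - φ s)⁻¹ := by
  have hcont : ContinuousOn (fun s : ℝ => (b s : ℂ) * (ζ - φ s)⁻¹) (Icc α β) :=
    (continuous_ofReal.comp hb).continuousOn.mul
      ((continuousOn_const.sub (continuous_ofReal.comp_continuousOn hφ)).inv₀
        fun s _ => sub_ofReal_ne_zero hζ (φ s))
  refine hcont.integrableOn_Icc.integrable_of_forall_notMem_eq_zero fun s hs => ?_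
  simp [hsupp s fun h => hs (Ioo_subset_Icc_self h)]

theorem norm_mul_inv_sub_mul_inv_le {a a₀ z w : ℂ} {u c A D : ℝ} (hz : z ≠ 0) (hw : w ≠ 0)
    (hc : 0 < c) (hu : 0 ≤ u) (hA : 0 ≤ A) (hD : 0 ≤ D) (hzu : c * u ≤ ‖z‖) (hwu : c * u ≤ ‖w‖)
    (ha : ‖a - a₀‖ ≤ A * u) (hzw : ‖a₀ * (w - z)‖ ≤ D * u ^ 2) :
    ‖a * z⁻¹ - a₀ * w⁻¹‖ ≤ A / c + D / c ^ 2 := by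
  have hsplit : a * z⁻¹ - a₀ * w⁻¹ = (a - a₀) / z + a₀ * (w - z) / (z * w) := by
    field_simp
    ring
  rw [hsplit]
  refine (norm_add_le _ _).trans (add_le_add ?_ ?_)
  · rw [norm_div, div_le_div_iff₀ (norm_pos_iff.2 hz) hc]
    calc ‖a - a₀‖ * c ≤ A * u * c := by gcongr
      _ = A * (c * u) := by ring
      _ ≤ A * ‖z‖ := by gcongr
  · rw [norm_div, norm_mul z w, div_le_div_iff₀ (by positivity) (by positivity)]
    calc ‖a₀ * (w - z)‖ * c ^ 2 ≤ D * u ^ 2 * c ^ 2 := by gcongr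
      _ = D * ((c * u) * (c * u)) := by ring
      _ ≤ D * (‖z‖ * ‖w‖) := by gcongr

theorem abs_le_of_lipschitzWith_of_eq_zero {b : ℝ → ℝ} {α β : ℝ} {L : ℝ≥0} (hαβ : α ≤ β)
    (hb : LipschitzWith L b) (hsupp : ∀ s ∉ Ioo α β, b s = 0) (s : ℝ) :
    |b s| ≤ L * (β - α) := by
  by_cases hs : s ∈ Ioo α β
  · have h := hb.norm_sub_le s α
    rw [hsupp α left_notMem_Ioo, sub_zero, Real.norm_eq_abs, Real.norm_eq_abs,
      abs_of_pos (sub_pos.2 hs.1)] at h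
    exact h.trans (by gcongr; exact hs.2.le)
  · rw [hsupp s hs, abs_zero]
    exact mul_nonneg L.2 (sub_nonneg.2 hαβ)

theorem mul_abs_le_norm_gaussianResolvent_denom {c d : ℝ} (hc : 0 < c) (hcd : c ≤ d) (ε u : ℝ) :
    c * |u| ≤ ‖(I * ε - d * u : ℂ)‖ :=
  calc c * |u| ≤ |(I * ε - d * u : ℂ).re| := by
        simp only [sub_re, I_mul_re, ofReal_im, neg_zero, re_ofReal_mul, ofReal_re, zero_sub,
          abs_neg, abs_mul, abs_of_pos (hc.trans_le hcd)]
        gcongr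
    _ ≤ _ := Complex.abs_re_le_norm _

theorem abs_sub_mul_gaussian_le {b : ℝ → ℝ} {B s₀ : ℝ} {L : ℝ≥0} (hb : LipschitzWith L b)
    (hB : |b s₀| ≤ B) (s : ℝ) :
    |b s - b s₀ * rexp (-π * (s - s₀) ^ 2)| ≤ (L + π * B) * |s - s₀| := by
  have hgauss : 0 ≤ 1 - rexp (-π * (s - s₀) ^ 2) :=
    sub_nonneg.2 (Real.exp_le_one_iff.2 (by nlinarith [pi_pos, sq_nonneg (s - s₀)]))
  calc _ = |(b s - b s₀) + b s₀ * (1 - rexp (-π * (s - s₀) ^ 2))| := by congr 1; ring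
    _ ≤ |b s - b s₀| + |b s₀| * (1 - rexp (-π * (s - s₀) ^ 2)) :=
        (abs_add_le _ _).trans_eq (by rw [abs_mul, abs_of_nonneg hgauss])
    _ ≤ L * |s - s₀| + B * (π * |s - s₀|) := by
        gcongr
        · exact hb.norm_sub_le s s₀
        · exact (abs_nonneg _).trans hB
        · exact one_sub_exp_neg_pi_mul_sq_le _
    _ = (L + π * B) * |s - s₀| := by ring

/-- Near the resonant point the denominators agree to second order. When `s₀` is an end of
`[α, β]`, so that `φ s₀ = Re ζ` may fail, the amplitude `b s₀` vanishes. -/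
theorem IsNondegeneratePhase.norm_mul_resolvent_sub_le {φ b : ℝ → ℝ} {α β c B : ℝ} {M L : ℝ≥0}
    (h : IsNondegeneratePhase φ α β c M) (hb : LipschitzWith L b) {ζ : ℂ} (hζ : ζ.im ≠ 0)
    {s s₀ : ℝ} (hs : s ∈ Icc α β) (hs₀ : s₀ ∈ Icc α β) (hB : |b s₀| ≤ B)
    (hlow : c * |s - s₀| ≤ |ζ.re - φ s|) (hres : φ s₀ = ζ.re ∨ b s₀ = 0) :
    ‖(b s : ℂ) * (ζ - φ s)⁻¹ - b s₀ * gaussianResolvent (deriv φ s₀) ζ.im (s - s₀)‖ ≤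
      (L + π * B) / c + B * M / c ^ 2 := by
  set G : ℝ := rexp (-π * (s - s₀) ^ 2) with hG
  have hB0 : 0 ≤ B := (abs_nonneg _).trans hB
  have hG1 : |G| ≤ 1 := by
    rw [hG, abs_exp]
    exact Real.exp_le_one_iff.2 (by nlinarith [pi_pos, sq_nonneg (s - s₀)])
  have hmodel : (b s₀ : ℂ) * gaussianResolvent (deriv φ s₀) ζ.im (s - s₀) =
      (b s₀ * G : ℝ) * (I * ζ.im - deriv φ s₀ * (s - s₀ : ℝ) : ℂ)⁻¹ := by
    rw [gaussianResolvent, hG]; push_cast; ring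
  have hdenom : (I * ζ.im - deriv φ s₀ * (s - s₀ : ℝ) : ℂ) - (ζ - φ s) =
      ((φ s - ζ.re - deriv φ s₀ * (s - s₀) : ℝ) : ℂ) := by
    apply Complex.ext
    · simp only [sub_re, I_mul_re, ofReal_im, neg_zero, re_ofReal_mul, ofReal_re]
      ring
    · simp
  rw [hmodel]
  refine norm_mul_inv_sub_mul_inv_le (u := |s - s₀|) (sub_ofReal_ne_zero hζ _)
    (fun h0 => hζ (by simpa using congrArg Complex.im h0)) h.slope_pos (abs_nonneg _)
    (by positivity) (by positivity)
    (hlow.trans (by simpa using abs_re_le_norm (ζ - φ s)))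
    (mul_abs_le_norm_gaussianResolvent_denom h.slope_pos (h.le_deriv s₀ hs₀) _ _) ?_ ?_
  · rw [← ofReal_sub, Complex.norm_real, Real.norm_eq_abs]
    exact abs_sub_mul_gaussian_le hb hB s
  · rw [hdenom, ← ofReal_mul, Complex.norm_real, Real.norm_eq_abs, abs_mul, abs_mul]
    rcases hres with hres | hres
    · rw [← hres, mul_assoc B]
      calc |b s₀| * |G| * |φ s - φ s₀ - deriv φ s₀ * (s - s₀)|
          ≤ B * 1 * (M * |s - s₀| ^ 2) := by
            gcongr
            · exact h.abs_sub_taylor_le hs hs₀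
        _ = B * (M * |s - s₀| ^ 2) := by ring
    · rw [hres, abs_zero, zero_mul, zero_mul]
      positivity

/-- Off `[α, β]` the amplitude `b` vanishes, which makes `b s₀` small. -/
theorem IsNondegeneratePhase.norm_mul_gaussianResolvent_le {φ b : ℝ → ℝ} {α β c : ℝ} {M L : ℝ≥0}
    (h : IsNondegeneratePhase φ α β c M) (hb : LipschitzWith L b) {s s₀ : ℝ} (hbs : b s = 0)
    (hne : s ≠ s₀) (hs₀ : s₀ ∈ Icc α β) (ε : ℝ) :
    ‖(b s₀ : ℂ) * gaussianResolvent (deriv φ s₀) ε (s - s₀)‖ ≤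
      L / c * rexp (-π * (s - s₀) ^ 2) := by
  have hu : 0 < c * |s - s₀| := mul_pos h.slope_pos (abs_pos.2 (sub_ne_zero.2 hne))
  have hamp : |b s₀| ≤ L * |s - s₀| := by
    simpa [hbs, abs_sub_comm] using hb.norm_sub_le s₀ s
  rw [gaussianResolvent, norm_mul, norm_mul, norm_cexp_neg_pi_mul_sq, norm_inv, Complex.norm_real,
    Real.norm_eq_abs]
  calc |b s₀| * (rexp (-π * (s - s₀) ^ 2) * ‖(I * ε - deriv φ s₀ * (s - s₀ : ℝ) : ℂ)‖⁻¹)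
      ≤ L * |s - s₀| * (rexp (-π * (s - s₀) ^ 2) * (c * |s - s₀|)⁻¹) := by
        gcongr
        exact mul_abs_le_norm_gaussianResolvent_denom h.slope_pos (h.le_deriv s₀ hs₀) _ _
    _ = L / c * rexp (-π * (s - s₀) ^ 2) := by
        have hs : |s - s₀| ≠ 0 := abs_ne_zero.2 (sub_ne_zero.2 hne)
        field_simp

theorem IsNondegeneratePhase.norm_mul_resolvent_sub_le_indicator_add {φ b : ℝ → ℝ}
    {α β c B : ℝ} {M L : ℝ≥0} (h : IsNondegeneratePhase φ α β c M) (hb : LipschitzWith L b)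
    (hsupp : ∀ s ∉ Ioo α β, b s = 0) {ζ : ℂ} (hζ : ζ.im ≠ 0) {s₀ : ℝ} (hs₀ : s₀ ∈ Icc α β)
    (hB : |b s₀| ≤ B) (hlow : ∀ s ∈ Icc α β, c * |s - s₀| ≤ |ζ.re - φ s|)
    (hres : φ s₀ = ζ.re ∨ b s₀ = 0) (s : ℝ) :
    ‖(b s : ℂ) * (ζ - φ s)⁻¹ - b s₀ * gaussianResolvent (deriv φ s₀) ζ.im (s - s₀)‖ ≤
      (Icc α β).indicator (fun _ => (L + π * B) / c + B * M / c ^ 2) s +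
        L / c * rexp (-π * (s - s₀) ^ 2) := by
  by_cases hs : s ∈ Icc α β
  · rw [indicator_of_mem hs]
    exact (h.norm_mul_resolvent_sub_le hb hζ hs hs₀ hB (hlow s hs) hres).trans
      (le_add_of_nonneg_right (mul_nonneg (div_nonneg L.2 h.slope_pos.le) (exp_pos _).le))
  · have hbs : b s = 0 := hsupp s fun hmem => hs (Ioo_subset_Icc_self hmem)
    rw [indicator_of_notMem hs, zero_add, hbs, ofReal_zero, zero_mul, zero_sub, norm_neg]
    exact h.norm_mul_gaussianResolvent_le hb hbs (fun he => hs (he ▸ hs₀)) hs₀ ζ.im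

theorem IsNondegeneratePhase.norm_fourier_mul_resolvent_le {φ b : ℝ → ℝ} {α β c : ℝ}
    {M L : ℝ≥0} (h : IsNondegeneratePhase φ α β c M) (hαβ : α ≤ β) (hb : LipschitzWith L b)
    (hsupp : ∀ s ∉ Ioo α β, b s = 0) {ζ : ℂ} (hζ : ζ.im ≠ 0) (x : ℝ) :
    ‖𝓕 (fun s : ℝ => (b s : ℂ) * (ζ - φ s)⁻¹) x‖ ≤ L * (β - α) * (2 * π / c) +
      (((L + π * (L * (β - α))) / c + L * (β - α) * M / c ^ 2) * (β - α) + L / c) := by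
  obtain ⟨s₀, hs₀, hlow, hres⟩ := h.exists_resonant_point hαβ ζ.re
  have hB := abs_le_of_lipschitzWith_of_eq_zero hαβ hb hsupp s₀
  set d : ℝ := deriv φ s₀
  set A : ℝ := (L + π * (L * (β - α))) / c + L * (β - α) * M / c ^ 2
  have hmodel : ‖𝓕 (fun s => (b s₀ : ℂ) * gaussianResolvent d ζ.im (s - s₀)) x‖ ≤
      L * (β - α) * (2 * π / c) := by
    have hc : 0 < c := h.slope_pos
    have hd : c ≤ d := h.le_deriv s₀ hs₀
    rw [fourier_const_mul, norm_mul, norm_fourier_comp_sub_right, Complex.norm_real]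
    exact mul_le_mul hB ((norm_fourier_gaussianResolvent_le (hc.trans_le hd) hζ x).trans
      (by gcongr)) (norm_nonneg _) ((abs_nonneg _).trans hB)
  have hA : Integrable ((Icc α β).indicator fun _ => A) :=
    (integrableOn_const isCompact_Icc.measure_lt_top.ne).integrable_indicator measurableSet_Icc
  have hG : Integrable fun s : ℝ => L / c * rexp (-π * (s - s₀) ^ 2) :=
    ((integrable_exp_neg_mul_sq pi_pos).comp_sub_right s₀).const_mul _
  have hAG : Integrable fun s =>
      (Icc α β).indicator (fun _ => A) s + L / c * rexp (-π * (s - s₀) ^ 2) := hA.add hG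
  have htotal : ∫ s, ((Icc α β).indicator (fun _ => A) s + L / c * rexp (-π * (s - s₀) ^ 2)) =
      A * (β - α) + L / c := by
    rw [integral_add hA hG, integral_indicator measurableSet_Icc, setIntegral_const,
      integral_const_mul, integral_sub_right_eq_self (fun s : ℝ => rexp (-π * s ^ 2)),
      integral_exp_neg_pi_mul_sq]
    simp [hαβ, mul_comm]
  rw [← htotal]
  exact (norm_fourier_le_add_integral (integrable_mul_resolvent h.continuousOn hb.continuous
    hsupp hζ) (((integrable_gaussianResolvent d hζ).comp_sub_right s₀).const_mul (b s₀ : ℂ)) hAG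
    (h.norm_mul_resolvent_sub_le_indicator_add hb hsupp hζ hs₀ hB hlow
      (hres.imp_right (hsupp s₀))) x).trans (by gcongr)

end NondegeneratePhase

section WeightedNorm

variable {E : Type*} [NormedAddCommGroup E]

/-- The Japanese bracket `⟨x⟩`. -/
def japaneseBracket (x : E) : ℝ :=
  √(1 + ‖x‖ ^ 2)

theorem japaneseBracket_pos (x : E) : 0 < japaneseBracket x :=
  Real.sqrt_pos.2 (by positivity)

theorem japaneseBracket_rpow (x : E) (δ : ℝ) :
    japaneseBracket x ^ δ = (1 + ‖x‖ ^ 2) ^ (δ / 2) := by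
  rw [japaneseBracket, Real.sqrt_eq_rpow, ← Real.rpow_mul (by positivity), one_div_mul_eq_div]

theorem continuous_japaneseBracket_rpow (δ : ℝ) : Continuous fun x : E => japaneseBracket x ^ δ :=
  Continuous.rpow_const (by unfold japaneseBracket; fun_prop) fun x =>
    .inl (japaneseBracket_pos x).ne'

/-- The weighted norm `‖⟨x⟩^δ f‖` in `L²`, with values in `[0, ∞]`. -/
def weightedNorm [MeasureSpace E] (δ : ℝ) (f : E → ℂ) : ℝ≥0∞ :=
  eLpNorm (fun x => ((japaneseBracket x ^ δ : ℝ) : ℂ) * f x) 2 volume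

theorem weightedNorm_sq [MeasureSpace E] (δ : ℝ) (f : E → ℂ) :
    weightedNorm δ f ^ 2 = ∫⁻ x, ENNReal.ofReal (japaneseBracket x ^ δ) ^ 2 * ‖f x‖ₑ ^ 2 := by
  have hpow := eLpNorm_nnreal_pow_eq_lintegral (p := 2) (μ := (volume : Measure E))
    (f := fun x => ((japaneseBracket x ^ δ : ℝ) : ℂ) * f x) two_ne_zero
  have henorm (x : E) :
      ‖((japaneseBracket x ^ δ : ℝ) : ℂ)‖ₑ = ENNReal.ofReal (japaneseBracket x ^ δ) := by
    rw [← ofReal_norm, Complex.norm_of_nonneg (Real.rpow_nonneg (japaneseBracket_pos x).le δ)]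
  simpa only [weightedNorm, ENNReal.coe_ofNat, NNReal.coe_ofNat, ENNReal.rpow_ofNat,
    enorm_mul, mul_pow, henorm] using hpow

theorem weightedNorm_ne_top {E : Type*} [NormedAddCommGroup E] [InnerProductSpace ℝ E]
    [FiniteDimensional ℝ E] [MeasurableSpace E] [BorelSpace E] (δ : ℝ) (f : 𝓢(E, ℂ)) :
    weightedNorm δ f ≠ ⊤ := by
  have hgrowth := Function.hasTemperateGrowth_one_add_norm_sq_rpow E (δ / 2)
  have hweight (x : E) : ((japaneseBracket x ^ δ : ℝ) : ℂ) * f x =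
      SchwartzMap.smulLeftCLM ℂ (fun x : E => (1 + ‖x‖ ^ 2) ^ (δ / 2)) f x := by
    rw [SchwartzMap.smulLeftCLM_apply_apply hgrowth, japaneseBracket_rpow, Complex.real_smul]
  rw [weightedNorm, funext hweight]
  exact (SchwartzMap.memLp _ 2 volume).eLpNorm_ne_top

theorem sq_lintegral_mul_le {α : Type*} [MeasurableSpace α] {μ : Measure α} {u v : α → ℝ≥0∞}
    (hu : AEMeasurable u μ) (hv : AEMeasurable v μ) :
    (∫⁻ x, u x * v x ∂μ) ^ 2 ≤ (∫⁻ x, u x ^ 2 ∂μ) * ∫⁻ x, v x ^ 2 ∂μ := by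
  have hholder := ENNReal.lintegral_mul_le_Lp_mul_Lq μ Real.HolderConjugate.two_two hu hv
  rw [← ENNReal.mul_rpow_of_nonneg _ _ (by norm_num), one_div,
    ENNReal.le_rpow_inv_iff two_pos] at hholder
  simpa only [ENNReal.rpow_ofNat, Pi.mul_apply] using hholder

/-- The square of the `L²(ℝ)` norm of `⟨x⟩^(-δ)`. -/
def bracketConst (δ : ℝ) : ℝ≥0∞ :=
  ∫⁻ x : ℝ, ENNReal.ofReal (japaneseBracket x ^ (-δ)) ^ 2

theorem bracketConst_ne_top {δ : ℝ} (hδ : 1 / 2 < δ) : bracketConst δ ≠ ⊤ := by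
  have hdecay := (integrable_rpow_neg_one_add_norm_sq (E := ℝ) (μ := volume) (r := 2 * δ)
    (by simp; linarith)).lintegral_lt_top.ne
  rw [bracketConst]
  convert hdecay using 4 with x
  rw [← ENNReal.ofReal_pow (Real.rpow_nonneg (japaneseBracket_pos x).le _), japaneseBracket_rpow,
    ← Real.rpow_mul_natCast (by positivity)]
  congr 2
  push_cast
  ring

theorem sq_lintegral_le_bracketConst_mul (δ : ℝ) {u : ℝ → ℝ≥0∞} (hu : Measurable u) :
    (∫⁻ x, u x) ^ 2 ≤
      bracketConst δ * ∫⁻ x, ENNReal.ofReal (japaneseBracket x ^ δ) ^ 2 * u x ^ 2 := by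
  have hweight (δ : ℝ) : Measurable fun x : ℝ => ENNReal.ofReal (japaneseBracket x ^ δ) :=
    (continuous_japaneseBracket_rpow δ).measurable.ennreal_ofReal
  have hcancel (x : ℝ) : ENNReal.ofReal (japaneseBracket x ^ (-δ)) *
      (ENNReal.ofReal (japaneseBracket x ^ δ) * u x) = u x := by
    have hx := japaneseBracket_pos x
    rw [← mul_assoc, ← ENNReal.ofReal_mul (Real.rpow_nonneg hx.le _), ← Real.rpow_add hx,
      neg_add_cancel, Real.rpow_zero, ENNReal.ofReal_one, one_mul]
  simpa only [Pi.mul_apply, hcancel, mul_pow, bracketConst] using sq_lintegral_mul_le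
    (hweight (-δ)).aemeasurable ((hweight δ).mul hu).aemeasurable

end WeightedNorm

section PartialFourier

variable {E F : Type*} [NormedAddCommGroup E] [InnerProductSpace ℝ E] [NormedAddCommGroup F]
  [InnerProductSpace ℝ F] (J : WithLp 2 (ℝ × F) ≃ₗᵢ[ℝ] E)

theorem inner_splitting (s t : ℝ) (y z : F) :
    ⟪J (WithLp.toLp 2 (s, y)), J (WithLp.toLp 2 (t, z))⟫ = ⟪s, t⟫ + ⟪y, z⟫ := by
  rw [LinearIsometryEquiv.inner_map_map, WithLp.prod_inner_apply]

theorem norm_le_norm_splitting (s : ℝ) (y : F) : ‖s‖ ≤ ‖J (WithLp.toLp 2 (s, y))‖ := by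
  rw [J.norm_map]
  exact WithLp.norm_fst_le _ (WithLp.toLp 2 (s, y))

theorem isometry_splitting (s : ℝ) : Isometry fun y : F => J (WithLp.toLp 2 (s, y)) :=
  Isometry.of_dist_eq fun y z => by simp [WithLp.prod_dist_eq_of_L2]

theorem hasTemperateGrowth_splitting (s : ℝ) :
    Function.HasTemperateGrowth fun y : F => J (WithLp.toLp 2 (s, y)) := by
  have hsplit (y : F) : J (WithLp.toLp 2 (s, y)) = J (WithLp.toLp 2 (s, 0)) +
      (J.toContinuousLinearEquiv.toContinuousLinearMap ∘L
        (WithLp.prodContinuousLinearEquiv 2 ℝ ℝ F).symm.toContinuousLinearMap ∘L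
        ContinuousLinearMap.inr ℝ ℝ F) y := by
    change _ = _ + J (WithLp.toLp 2 (0, y))
    rw [← map_add, ← WithLp.toLp_add, Prod.mk_add_mk, add_zero, zero_add]
  exact (funext hsplit).symm ▸ (by fun_prop)

variable [FiniteDimensional ℝ F] [MeasurableSpace F] [BorelSpace F]

/-- The Fourier transform of `f` in the second variable of the splitting `J`. -/
def partialFourier (f : E → ℂ) (x : ℝ) (y : F) : ℂ :=
  𝓕 (fun z => f (J (WithLp.toLp 2 (x, z)))) y

theorem measurable_partialFourier {f : E → ℂ} (hf : Continuous f) :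
    Measurable (Function.uncurry (partialFourier J f)) := by
  have h : Continuous fun z : (ℝ × F) × F => 𝐞 (-⟪z.2, z.1.2⟫) •
      f (J (WithLp.toLp 2 (z.1.1, z.2))) := by fun_prop
  exact (h.stronglyMeasurable.integral_prod_right' (ν := (volume : Measure F))).measurable

theorem lintegral_enorm_sq_partialFourier (f : 𝓢(E, ℂ)) (x : ℝ) :
    ∫⁻ y, ‖partialFourier J f x y‖ₑ ^ 2 = ∫⁻ z, ‖f (J (WithLp.toLp 2 (x, z)))‖ₑ ^ 2 :=
  lintegral_enorm_fourier_sq (SchwartzMap.compCLMOfAntilipschitz ℝ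
    (hasTemperateGrowth_splitting J x) (isometry_splitting J x).antilipschitz f)

variable [MeasurableSpace E] [BorelSpace E]

theorem measurableEmbedding_splitting :
    MeasurableEmbedding fun z : ℝ × F => J (WithLp.toLp 2 z) :=
  J.toMeasurableEquiv.measurableEmbedding.comp
    (MeasurableEquiv.toLp 2 (ℝ × F)).measurableEmbedding

variable [FiniteDimensional ℝ E]

theorem measurePreserving_splitting :
    MeasurePreserving fun z : ℝ × F => J (WithLp.toLp 2 z) :=
  J.measurePreserving.comp (WithLp.volume_preserving_toLp ℝ F)

theorem integrable_fourier_phase_splitting {f : E → ℂ} (hf : Integrable f) (s : ℝ) (y : F) :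
    Integrable (fun z : ℝ × F => 𝐞 (-(⟪z.1, s⟫ + ⟪z.2, y⟫)) • f (J (WithLp.toLp 2 z))) := by
  have h := (measurePreserving_splitting J).integrable_comp_of_integrable
    ((fourierIntegral_convergent_iff (J (WithLp.toLp 2 (s, y)))).2 hf)
  simpa only [Function.comp_def, inner_splitting J _ s _ y] using h

theorem integrable_partialFourier {f : E → ℂ} (hf : Integrable f) (y : F) :
    Integrable fun x => partialFourier J f x y := by
  have h := (integrable_fourier_phase_splitting J hf 0 y).integral_prod_left
  simpa only [partialFourier, inner_zero_right, zero_add, ← fourier_eq] using h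

theorem fourier_splitting {f : E → ℂ} (hf : Integrable f) (s : ℝ) (y : F) :
    𝓕 f (J (WithLp.toLp 2 (s, y))) = 𝓕 (fun x => partialFourier J f x y) s := by
  rw [fourier_eq, ← (measurePreserving_splitting J).integral_comp (measurableEmbedding_splitting J)]
  simp_rw [inner_splitting J _ s _ y]
  refine (integral_prod _ (integrable_fourier_phase_splitting J hf s y)).trans ?_
  rw [fourier_eq]
  refine integral_congr_ae (.of_forall fun x => ?_)
  simp only [partialFourier, fourier_eq, neg_add, AddChar.map_add_eq_mul, mul_smul,
    Circle.smul_def, smul_eq_mul, integral_const_mul]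

theorem lintegral_sq_lintegral_partialFourier_le {δ : ℝ} (hδ : 1 / 2 < δ) (f : 𝓢(E, ℂ)) :
    ∫⁻ y, (∫⁻ x, ‖partialFourier J f x y‖ₑ) ^ 2 ≤ bracketConst δ * weightedNorm δ f ^ 2 := by
  have hmeas := measurable_partialFourier J f.continuous
  set w : ℝ → ℝ≥0∞ := fun x => ENNReal.ofReal (japaneseBracket x ^ δ) ^ 2
  have hw : Measurable w :=
    (continuous_japaneseBracket_rpow δ).measurable.ennreal_ofReal.pow_const 2
  have hw_top (x : ℝ) : w x ≠ ⊤ := ENNReal.pow_ne_top ENNReal.ofReal_ne_top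
  have hw_le (z : ℝ × F) :
      w z.1 ≤ ENNReal.ofReal (japaneseBracket (J (WithLp.toLp 2 z)) ^ δ) ^ 2 := by
    simp only [w, japaneseBracket]
    gcongr
    exact norm_le_norm_splitting J z.1 z.2
  calc ∫⁻ y, (∫⁻ x, ‖partialFourier J f x y‖ₑ) ^ 2
      ≤ ∫⁻ y, bracketConst δ * ∫⁻ x, w x * ‖partialFourier J f x y‖ₑ ^ 2 :=
        lintegral_mono fun y => sq_lintegral_le_bracketConst_mul δ
          (hmeas.comp (measurable_id.prodMk measurable_const)).enorm
    _ = bracketConst δ * ∫⁻ x, w x * ∫⁻ y, ‖partialFourier J f x y‖ₑ ^ 2 := by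
        rw [lintegral_const_mul' _ _ (bracketConst_ne_top hδ), lintegral_lintegral_swap]
        · simp_rw [lintegral_const_mul' _ _ (hw_top _)]
        · exact ((hw.comp measurable_snd).mul
            ((hmeas.comp measurable_swap).enorm.pow_const 2)).aemeasurable
    _ = bracketConst δ * ∫⁻ z : ℝ × F, w z.1 * ‖f (J (WithLp.toLp 2 z))‖ₑ ^ 2 := by
        simp_rw [lintegral_enorm_sq_partialFourier, ← lintegral_const_mul' _ _ (hw_top _)]
        rw [Measure.volume_eq_prod, lintegral_prod]
        exact ((hw.comp measurable_fst).mul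
          ((f.continuous.comp (by fun_prop)).measurable.enorm.pow_const 2)).aemeasurable
    _ ≤ bracketConst δ * weightedNorm δ f ^ 2 := by
        rw [weightedNorm_sq, ← (measurePreserving_splitting J).lintegral_comp_emb
          (measurableEmbedding_splitting J)]
        gcongr with z
        exact hw_le z

theorem lintegral_mul_lintegral_partialFourier_le {δ : ℝ} (hδ : 1 / 2 < δ) (f g : 𝓢(E, ℂ)) :
    ∫⁻ y, (∫⁻ x, ‖partialFourier J f x y‖ₑ) * ∫⁻ x, ‖partialFourier J g x y‖ₑ ≤
      bracketConst δ * weightedNorm δ f * weightedNorm δ g := by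
  have hmeas (f : 𝓢(E, ℂ)) : AEMeasurable fun y => ∫⁻ x, ‖partialFourier J f x y‖ₑ :=
    (measurable_partialFourier J f.continuous).enorm.lintegral_prod_left'.aemeasurable
  rw [← ENNReal.pow_le_pow_left_iff two_ne_zero]
  calc _ ≤ _ := sq_lintegral_mul_le (hmeas f) (hmeas g)
    _ ≤ (bracketConst δ * weightedNorm δ f ^ 2) * (bracketConst δ * weightedNorm δ g ^ 2) := by
        gcongr <;> exact lintegral_sq_lintegral_partialFourier_le J hδ _
    _ = (bracketConst δ * weightedNorm δ f * weightedNorm δ g) ^ 2 := by ring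

theorem enorm_integral_mul_fourier_mul_conj_fourier_le {δ : ℝ} (hδ : 1 / 2 < δ) (f g : 𝓢(E, ℂ))
    {q : E → ℂ} {K : ℝ} (hq : ∀ y : F, Integrable fun s : ℝ => q (J (WithLp.toLp 2 (s, y))))
    (hK : ∀ (y : F) (x : ℝ), ‖𝓕 (fun s : ℝ => q (J (WithLp.toLp 2 (s, y)))) x‖ ≤ K)
    (hint : Integrable fun ξ => q ξ * 𝓕 (f : E → ℂ) ξ * conj (𝓕 (g : E → ℂ) ξ)) :
    ‖∫ ξ, q ξ * 𝓕 (f : E → ℂ) ξ * conj (𝓕 (g : E → ℂ) ξ)‖ₑ ≤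
      ENNReal.ofReal K * (bracketConst δ * weightedNorm δ f * weightedNorm δ g) := by
  have hK₀ : 0 ≤ K := (norm_nonneg _).trans (hK 0 0)
  have hline (y : F) : ‖∫ s : ℝ, q (J (WithLp.toLp 2 (s, y))) *
      𝓕 (f : E → ℂ) (J (WithLp.toLp 2 (s, y))) *
        conj (𝓕 (g : E → ℂ) (J (WithLp.toLp 2 (s, y))))‖ₑ ≤
      ENNReal.ofReal K *
        ((∫⁻ x, ‖partialFourier J f x y‖ₑ) * ∫⁻ x, ‖partialFourier J g x y‖ₑ) := by
    have hf := integrable_partialFourier J f.integrable y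
    have hg := integrable_partialFourier J g.integrable y
    simp_rw [fourier_splitting J f.integrable, fourier_splitting J g.integrable]
    rw [← ofReal_integral_norm_eq_lintegral_enorm hf, ← ofReal_integral_norm_eq_lintegral_enorm hg,
      ← ENNReal.ofReal_mul (by positivity), ← ENNReal.ofReal_mul hK₀, ← mul_assoc, ← ofReal_norm]
    exact ENNReal.ofReal_le_ofReal
      (norm_integral_mul_fourier_mul_conj_fourier_le (hq y) hf hg (hK y))
  rw [← (measurePreserving_splitting J).integral_comp (measurableEmbedding_splitting J)]
  calc _ = ‖∫ y : F, ∫ s : ℝ, q (J (WithLp.toLp 2 (s, y))) *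
        𝓕 (f : E → ℂ) (J (WithLp.toLp 2 (s, y))) *
          conj (𝓕 (g : E → ℂ) (J (WithLp.toLp 2 (s, y))))‖ₑ := congrArg _ (integral_prod_symm _
        ((measurePreserving_splitting J).integrable_comp_of_integrable hint))
    _ ≤ _ := enorm_integral_le_lintegral_enorm _
    _ ≤ _ := lintegral_mono hline
    _ ≤ _ := by
        rw [lintegral_const_mul' _ _ ENNReal.ofReal_ne_top]
        gcongr
        exact lintegral_mul_lintegral_partialFourier_le J hδ f g

end PartialFourier

section LineBounded

variable {E : Type*} [NormedAddCommGroup E] [InnerProductSpace ℝ E] {e : E} {q : E → ℂ} {K : ℝ}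

/-- The symbol `q` is integrable along every line in the direction `e`, and its Fourier transforms
along these lines are bounded by `K`. The lines are indexed by their base points `y ⟂ e`. -/
def LineBounded (e : E) (q : E → ℂ) (K : ℝ) : Prop :=
  ∀ y, ⟪e, y⟫ = 0 → (Integrable fun s : ℝ => q (s • e + y)) ∧
    ∀ x : ℝ, ‖𝓕 (fun s : ℝ => q (s • e + y)) x‖ ≤ K

/-- The dilation of symbols which preserves Fourier transforms along lines up to rescaling. -/
def dilation (R : ℝ) (q : E → ℂ) (ξ : E) : ℂ :=
  (R : ℂ)⁻¹ * q (R⁻¹ • ξ)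

theorem fourier_inv_mul_comp_inv_mul (h : ℝ → ℂ) {R : ℝ} (hR : 0 < R) (x : ℝ) :
    𝓕 (fun s => (R : ℂ)⁻¹ * h (R⁻¹ * s)) x = 𝓕 h (R * x) := by
  have hR' : (R : ℂ) ≠ 0 := mod_cast hR.ne'
  have hchange := Measure.integral_comp_mul_left (fun s => 𝐞 (-(s * (R * x))) • h s) R⁻¹
  rw [inv_inv, abs_of_pos hR] at hchange
  rw [fourier_const_mul, Real.fourier_real_eq, Real.fourier_real_eq, inv_mul_eq_iff_eq_mul₀ hR',
    ← Complex.real_smul, ← hchange]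
  congr! 4 with s
  field_simp

theorem LineBounded.dilate (h : LineBounded e q K) {R : ℝ} (hR : 0 < R) :
    LineBounded e (dilation R q) K := by
  intro y hy
  obtain ⟨hint, hK⟩ := h (R⁻¹ • y) (by rw [inner_smul_right, hy, mul_zero])
  have hline : (fun s : ℝ => dilation R q (s • e + y)) =
      fun s => (R : ℂ)⁻¹ * q ((R⁻¹ * s) • e + R⁻¹ • y) := by
    funext s
    rw [dilation, smul_add, smul_smul]
  rw [hline]
  refine ⟨(hint.comp_mul_left' (inv_ne_zero hR.ne')).const_mul _, fun x => ?_⟩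
  rw [fourier_inv_mul_comp_inv_mul (fun s => q (s • e + R⁻¹ • y)) hR]
  exact hK _

theorem sq_norm_smul_add (he : ‖e‖ = 1) {y : E} (hy : ⟪e, y⟫ = 0) (s : ℝ) :
    ‖s • e + y‖ ^ 2 = s ^ 2 + ‖y‖ ^ 2 := by
  rw [norm_add_sq_real, real_inner_smul_left, hy, norm_smul, he]
  simp

theorem inner_smul_add (he : ‖e‖ = 1) {y : E} (hy : ⟪e, y⟫ = 0) (s : ℝ) :
    ⟪e, s • e + y⟫ = s := by
  rw [inner_add_right, real_inner_smul_right, real_inner_self_eq_norm_sq, he, hy]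
  ring

variable [MeasurableSpace E] [BorelSpace E]

/-- On the support of `q` the line `s • e + y` has `|s| ≤ ‖y‖`, an interval of length `2 ‖y‖` on
which `‖q‖ ≤ A / ‖y‖`. -/
theorem lineBounded_of_norm_mul_norm_le (he : ‖e‖ = 1) (hq : Measurable q) {A : ℝ}
    (hA : ∀ ξ, ‖ξ‖ * ‖q ξ‖ ≤ A) (hsupp : ∀ ξ, ‖ξ‖ ^ 2 < 2 * ⟪e, ξ⟫ ^ 2 → q ξ = 0) :
    LineBounded e q (2 * A) := by
  intro y hy
  have hA₀ : 0 ≤ A := (mul_nonneg (norm_nonneg _) (norm_nonneg _)).trans (hA 0)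
  have hle : ∀ᵐ s : ℝ, ‖q (s • e + y)‖ ≤ (Icc (-‖y‖) ‖y‖).indicator (fun _ => A / ‖y‖) s := by
    filter_upwards [Measure.ae_ne volume (0 : ℝ)] with s hs
    have hnorm := sq_norm_smul_add he hy s
    by_cases hmem : s ∈ Icc (-‖y‖) ‖y‖
    · have hy₀ : 0 < ‖y‖ := (abs_pos.2 hs).trans_le (abs_le.2 hmem)
      rw [indicator_of_mem hmem, le_div_iff₀' hy₀]
      refine le_trans ?_ (hA (s • e + y))
      gcongr
      exact le_of_sq_le_sq (by linarith [sq_nonneg s]) (norm_nonneg _)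
    · rw [indicator_of_notMem hmem, hsupp, norm_zero]
      have hlt : ‖y‖ < |s| := not_le.1 fun h => hmem (abs_le.1 h)
      rw [hnorm, inner_smul_add he hy]
      linarith [(sq_lt_sq₀ (norm_nonneg y) (abs_nonneg s)).2 hlt, sq_abs s]
  have hind : Integrable ((Icc (-‖y‖) ‖y‖).indicator fun _ => A / ‖y‖) :=
    (integrable_indicator_iff measurableSet_Icc).2 (by simp)
  have hline : Measurable fun s : ℝ => q (s • e + y) :=
    hq.comp (by fun_prop : Continuous fun s : ℝ => s • e + y).measurable
  refine ⟨hind.mono' hline.aestronglyMeasurable hle, fun x => ?_⟩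
  calc ‖𝓕 (fun s : ℝ => q (s • e + y)) x‖ ≤ ∫ s : ℝ, ‖q (s • e + y)‖ :=
        norm_fourier_le_integral_norm _ x
    _ ≤ ∫ s, (Icc (-‖y‖) ‖y‖).indicator (fun _ => A / ‖y‖) s :=
        integral_mono_of_nonneg (.of_forall fun _ => norm_nonneg _) hind hle
    _ = 2 * ‖y‖ * (A / ‖y‖) := by
        rw [integral_indicator measurableSet_Icc, setIntegral_const, Real.volume_real_Icc_of_le
          (neg_le_self (norm_nonneg y)), smul_eq_mul]
        ring
    _ ≤ 2 * A := by
        rw [mul_assoc]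
        gcongr
        rw [mul_div_left_comm]
        exact mul_le_of_le_one_right hA₀ (div_self_le_one _)

end LineBounded

section FormBounded

variable {E : Type*} [NormedAddCommGroup E] [InnerProductSpace ℝ E] {e : E} {q : E → ℂ}
  {δ A K : ℝ}

/-- The splitting of a Euclidean space along the line spanned by a unit vector. -/
def lineSplitting (e : E) (he : ‖e‖ = 1) : WithLp 2 (ℝ × (ℝ ∙ e)ᗮ) ≃ₗᵢ[ℝ] E :=
  (LinearIsometryEquiv.withLpProdCongr 2 (LinearIsometryEquiv.toSpanUnitSingleton e he)
    (LinearIsometryEquiv.refl ℝ _)).trans (Submodule.orthogonalDecomposition (ℝ ∙ e)).symm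

theorem lineSplitting_apply (he : ‖e‖ = 1) (s : ℝ) (y : (ℝ ∙ e)ᗮ) :
    lineSplitting e he (WithLp.toLp 2 (s, y)) = s • e + y := by
  simp [lineSplitting]

variable [FiniteDimensional ℝ E]

theorem exists_sq_inner_add_sq_inner_le (hE : 2 ≤ Module.finrank ℝ E) :
    ∃ e₁ e₂ : E, ‖e₁‖ = 1 ∧ ‖e₂‖ = 1 ∧ ∀ ξ, ⟪e₁, ξ⟫ ^ 2 + ⟪e₂, ξ⟫ ^ 2 ≤ ‖ξ‖ ^ 2 := by
  let b := stdOrthonormalBasis ℝ E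
  let i : Fin (Module.finrank ℝ E) := ⟨0, by lia⟩
  let j : Fin (Module.finrank ℝ E) := ⟨1, by lia⟩
  have hij : i ≠ j := by simp [i, j]
  refine ⟨b i, b j, b.orthonormal.1 i, b.orthonormal.1 j, fun ξ => ?_⟩
  simpa [Finset.sum_pair hij] using b.orthonormal.sum_inner_products_le (s := {i, j}) ξ

variable [MeasurableSpace E] [BorelSpace E]

/-- The multiplier with symbol `q`, as a sesquilinear form on Schwartz functions, is bounded by `C`
with respect to the weight `⟨x⟩ ^ δ`; integrability is part of the notion so that the form is not
a junk value. -/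
structure FormBounded (δ : ℝ) (q : E → ℂ) (C : ℝ≥0∞) : Prop where
  integrable : ∀ f : 𝓢(E, ℂ), Integrable fun ξ => q ξ * 𝓕 (f : E → ℂ) ξ
  enorm_integral_le : ∀ f g : 𝓢(E, ℂ),
    ‖∫ ξ, q ξ * 𝓕 (f : E → ℂ) ξ * conj (𝓕 (g : E → ℂ) ξ)‖ₑ ≤
      C * (weightedNorm δ f * weightedNorm δ g)

theorem integrable_mul_conj_fourier {F : E → ℂ} (hF : Integrable F) (g : 𝓢(E, ℂ)) :
    Integrable fun ξ => F ξ * conj (𝓕 (g : E → ℂ) ξ) :=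
  hF.mul_bdd (Complex.continuous_conj.comp (continuous_fourier g.integrable)).aestronglyMeasurable
    (.of_forall fun ξ => (RCLike.norm_conj _).trans_le (norm_fourier_le_integral_norm _ ξ))

theorem FormBounded.add {q₁ q₂ : E → ℂ} {C₁ C₂ : ℝ≥0∞} (h₁ : FormBounded δ q₁ C₁)
    (h₂ : FormBounded δ q₂ C₂) : FormBounded δ (q₁ + q₂) (C₁ + C₂) := by
  constructor
  · intro f
    simp only [Pi.add_apply, add_mul]
    exact (h₁.integrable f).add (h₂.integrable f)
  · intro f g
    simp only [Pi.add_apply, add_mul]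
    rw [integral_add (integrable_mul_conj_fourier (h₁.integrable f) g)
      (integrable_mul_conj_fourier (h₂.integrable f) g)]
    exact (enorm_add_le _ _).trans
      (add_le_add (h₁.enorm_integral_le f g) (h₂.enorm_integral_le f g))

theorem FormBounded.sum {ι : Type*} (s : Finset ι) {q : ι → E → ℂ} {C : ι → ℝ≥0∞}
    (h : ∀ i ∈ s, FormBounded δ (q i) (C i)) : FormBounded δ (∑ i ∈ s, q i) (∑ i ∈ s, C i) := by
  classical
  induction s using Finset.induction_on with
  | empty => exact ⟨fun f => by simp, fun f g => by simp⟩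
  | insert i s hi ih =>
    rw [Finset.sum_insert hi, Finset.sum_insert hi]
    exact (h i (Finset.mem_insert_self i s)).add
      (ih fun j hj => h j (Finset.mem_insert_of_mem hj))

theorem LineBounded.formBounded (h : LineBounded e q K) (he : ‖e‖ = 1) (hδ : 1 / 2 < δ)
    (hint : ∀ f : 𝓢(E, ℂ), Integrable fun ξ => q ξ * 𝓕 (f : E → ℂ) ξ) :
    FormBounded δ q (ENNReal.ofReal K * bracketConst δ) := by
  refine ⟨hint, fun f g => ?_⟩
  have horth (y : (ℝ ∙ e)ᗮ) : ⟪e, (y : E)⟫ = 0 :=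
    Submodule.mem_orthogonal_singleton_iff_inner_right.1 y.2
  calc _ ≤ ENNReal.ofReal K * (bracketConst δ * weightedNorm δ f * weightedNorm δ g) :=
        enorm_integral_mul_fourier_mul_conj_fourier_le (lineSplitting e he) hδ f g
          (fun y => by simpa only [lineSplitting_apply] using (h y (horth y)).1)
          (fun y => by simpa only [lineSplitting_apply] using (h y (horth y)).2)
          (integrable_mul_conj_fourier (hint f) g)
    _ = _ := by ring

/-- In dimension at least two `‖ξ‖⁻¹` is locally integrable. -/
theorem integrable_mul_schwartz (hE : 2 ≤ Module.finrank ℝ E) (hq : Measurable q)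
    (hA : ∀ ξ, ‖ξ‖ * ‖q ξ‖ ≤ A) (u : 𝓢(E, ℂ)) : Integrable fun ξ => q ξ * u ξ := by
  have : Nontrivial E := Module.nontrivial_of_finrank_pos (R := ℝ) (by lia)
  have hloc : LocallyIntegrable q := by
    refine locallyIntegrable_of_norm_le_rpow (by lia) (C := A) (α := 1) (mod_cast hE) ?_
      hq.aestronglyMeasurable
    filter_upwards [Measure.ae_ne volume (0 : E)] with ξ hξ
    rw [Real.rpow_neg_one, ← div_eq_mul_inv, le_div_iff₀' (norm_pos_iff.2 hξ)]
    exact hA ξ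
  rw [← integrableOn_univ, ← union_compl_self (Metric.closedBall (0 : E) 1)]
  refine IntegrableOn.union ?_ ?_
  · exact (hloc.integrableOn_isCompact (isCompact_closedBall 0 1)).mul_continuousOn
      u.continuous.continuousOn (isCompact_closedBall 0 1)
  · refine u.integrable.integrableOn.bdd_mul hq.aestronglyMeasurable (c := A) ?_
    filter_upwards [ae_restrict_mem measurableSet_closedBall.compl] with ξ hξ
    have hone : 1 ≤ ‖ξ‖ := by simpa using (not_le.1 (mem_closedBall_zero_iff.not.1 hξ)).le
    exact (le_mul_of_one_le_left (norm_nonneg _) hone).trans (hA ξ)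

theorem integrable_mul_fourier_schwartz (hE : 2 ≤ Module.finrank ℝ E) (hq : Measurable q)
    (hA : ∀ ξ, ‖ξ‖ * ‖q ξ‖ ≤ A) (f : 𝓢(E, ℂ)) :
    Integrable fun ξ => q ξ * 𝓕 (f : E → ℂ) ξ :=
  integrable_mul_schwartz hE hq hA (𝓕 f)

theorem formBounded_indicator (hE : 2 ≤ Module.finrank ℝ E) (hδ : 1 / 2 < δ) (hq : Measurable q)
    (hA : ∀ ξ, ‖ξ‖ * ‖q ξ‖ ≤ A) (he : ‖e‖ = 1) {D : Set E} (hD : MeasurableSet D)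
    (hcone : ∀ ξ ∈ D, 2 * ⟪e, ξ⟫ ^ 2 ≤ ‖ξ‖ ^ 2) :
    FormBounded δ (D.indicator q) (ENNReal.ofReal (2 * A) * bracketConst δ) := by
  have hmeas : Measurable (D.indicator q) := hq.indicator hD
  have hle (ξ : E) : ‖ξ‖ * ‖D.indicator q ξ‖ ≤ A :=
    (mul_le_mul_of_nonneg_left (norm_indicator_le_norm_self q ξ) (norm_nonneg ξ)).trans (hA ξ)
  refine (lineBounded_of_norm_mul_norm_le he hmeas hle fun ξ hξ => ?_).formBounded he hδ
    (integrable_mul_fourier_schwartz hE hmeas hle)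
  exact indicator_of_notMem (fun h => (hcone ξ h).not_gt hξ) q

/-- The cones `2 ⟪eᵢ, ξ⟫² ≤ ‖ξ‖²` of two orthonormal vectors cover the space. -/
theorem formBounded_of_norm_mul_norm_le (hE : 2 ≤ Module.finrank ℝ E) (hδ : 1 / 2 < δ)
    (hq : Measurable q) (hA : ∀ ξ, ‖ξ‖ * ‖q ξ‖ ≤ A) :
    FormBounded δ q (2 * (ENNReal.ofReal (2 * A) * bracketConst δ)) := by
  obtain ⟨e₁, e₂, he₁, he₂, hle⟩ := exists_sq_inner_add_sq_inner_le hE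
  let D : Set E := {ξ | 2 * ⟪e₁, ξ⟫ ^ 2 ≤ ‖ξ‖ ^ 2}
  have hD : MeasurableSet D :=
    (isClosed_le (by fun_prop) (by fun_prop) : IsClosed D).measurableSet
  have hcompl : ∀ ξ ∈ Dᶜ, 2 * ⟪e₂, ξ⟫ ^ 2 ≤ ‖ξ‖ ^ 2 := fun ξ hξ => by
    have hlt : ‖ξ‖ ^ 2 < 2 * ⟪e₁, ξ⟫ ^ 2 := not_le.1 hξ
    linarith [hle ξ]
  have h := (formBounded_indicator hE hδ hq hA he₁ hD fun _ hξ => hξ).add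
    (formBounded_indicator hE hδ hq hA he₂ hD.compl hcompl)
  rwa [indicator_self_add_compl, ← two_mul] at h

end FormBounded

section LocalizedResolvent

variable {E : Type*} [NormedAddCommGroup E]

theorem hasDerivAt_comp_smul_add [NormedSpace ℝ E] {p : E → ℝ} {e y : E} {s : ℝ}
    (hp : DifferentiableAt ℝ p (s • e + y)) :
    HasDerivAt (fun s : ℝ => p (s • e + y)) (fderiv ℝ p (s • e + y) e) s := by
  have hline : HasDerivAt (fun s : ℝ => s • e + y) e s := by
    simpa using ((hasDerivAt_id s).smul_const e).add_const y
  exact hp.hasFDerivAt.comp_hasDerivAt s hline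

theorem isometry_smul_add [NormedSpace ℝ E] {e : E} (he : ‖e‖ = 1) (y : E) :
    Isometry fun s : ℝ => s • e + y :=
  Isometry.of_dist_eq fun s t => by
    rw [dist_add_right, dist_eq_norm, ← sub_smul, norm_smul, he, mul_one, dist_eq_norm]

theorem exists_isNondegeneratePhase_line [NormedSpace ℝ E] {p : E → ℝ} {e ξ₀ : E}
    (hp : ContDiffAt ℝ 2 p ξ₀) (he : ‖e‖ = 1) (hpos : 0 < fderiv ℝ p ξ₀ e) :
    ∃ c M, ∃ ρ > 0, ∀ y α β, (∀ s ∈ Icc α β, s • e + y ∈ Metric.ball ξ₀ ρ) →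
      IsNondegeneratePhase (fun s : ℝ => p (s • e + y)) α β c M := by
  have hfderiv : ContDiffAt ℝ 1 (fderiv ℝ p) ξ₀ := hp.fderiv_right (by norm_num)
  obtain ⟨M, t, ht, hM⟩ := hfderiv.exists_lipschitzOnWith
  obtain ⟨c, hc, hcp⟩ := exists_between hpos
  have hnear : ∀ᶠ ξ in 𝓝 ξ₀, DifferentiableAt ℝ p ξ ∧ c < fderiv ℝ p ξ e ∧ ξ ∈ t := by
    filter_upwards [hp.eventually (by simp), ht,
      (hfderiv.continuousAt.clm_apply continuousAt_const).eventually_const_lt hcp]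
      with ξ hξ hξt hξc
    exact ⟨hξ.differentiableAt (by simp), hξc, hξt⟩
  obtain ⟨ρ, hρ, hball⟩ := Metric.eventually_nhds_iff_ball.1 hnear
  refine ⟨c, M, ρ, hρ, fun y α β hline => ?_⟩
  have hderiv (s : ℝ) (hs : s ∈ Icc α β) :=
    hasDerivAt_comp_smul_add (hball _ (hline s hs)).1
  refine ⟨hc, fun s hs => (hderiv s hs).differentiableAt, fun s hs => ?_,
    LipschitzOnWith.of_dist_le_mul fun s hs r hr => ?_⟩
  · rw [(hderiv s hs).deriv]
    exact (hball _ (hline s hs)).2.1.le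
  · rw [(hderiv s hs).deriv, (hderiv r hr).deriv, dist_eq_norm, ← sub_apply,
      ← (isometry_smul_add he y).dist_eq]
    calc _ ≤ ‖fderiv ℝ p (s • e + y) - fderiv ℝ p (r • e + y)‖ * ‖e‖ :=
          ContinuousLinearMap.le_opNorm _ _
      _ ≤ _ := by
          rw [he, mul_one, ← dist_eq_norm]
          exact hM.dist_le_mul _ (hball _ (hline s hs)).2.2 _ (hball _ (hline r hr)).2.2

/-- If the line meets the support of `b` at parameter `s₀`, it stays within the ball of radius `3ρ`
for `|s - s₀| ≤ 2ρ`, and outside the ball of radius `ρ` for `|s - s₀| ≥ 2ρ`. -/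
theorem exists_lineBounded_mul_resolvent [InnerProductSpace ℝ E] {p : E → ℝ} {e ξ₀ : E}
    (hp : ContDiffAt ℝ 2 p ξ₀) (he : ‖e‖ = 1) (hpos : 0 < fderiv ℝ p ξ₀ e) :
    ∃ ρ > 0, ∀ (b : E → ℝ) (L : ℝ≥0), LipschitzWith L b → (∀ ξ ∉ Metric.ball ξ₀ ρ, b ξ = 0) →
      ∃ K, ∀ ζ : ℂ, ζ.im ≠ 0 → LineBounded e (fun ξ => (b ξ : ℂ) * (ζ - p ξ)⁻¹) K := by
  obtain ⟨c, M, r, hr, hphase⟩ := exists_isNondegeneratePhase_line hp he hpos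
  obtain ⟨ρ, rfl⟩ : ∃ ρ, r = 3 * ρ := ⟨r / 3, by ring⟩
  have hρ : 0 < ρ := by linarith
  refine ⟨ρ, hρ, fun b L hb hsupp => ?_⟩
  let K : ℝ := L * (4 * ρ) * (2 * π / c) +
    (((L + π * (L * (4 * ρ))) / c + L * (4 * ρ) * M / c ^ 2) * (4 * ρ) + L / c)
  refine ⟨max K 0, fun ζ hζ y _ => ?_⟩
  by_cases hmeet : ∃ s₀ : ℝ, s₀ • e + y ∈ Metric.ball ξ₀ ρ
  · obtain ⟨s₀, hs₀⟩ := hmeet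
    have hdist (s : ℝ) : dist (s • e + y) (s₀ • e + y) = |s - s₀| :=
      (isometry_smul_add he y).dist_eq s s₀
    rw [Metric.mem_ball] at hs₀
    have hφ := hphase y (s₀ - 2 * ρ) (s₀ + 2 * ρ) fun s hs => Metric.mem_ball.2 <| by
      have hs' : |s - s₀| ≤ 2 * ρ := abs_le.2 ⟨by linarith [hs.1], by linarith [hs.2]⟩
      linarith [dist_triangle (s • e + y) (s₀ • e + y) ξ₀, hdist s]
    have hbline : LipschitzWith L fun s : ℝ => b (s • e + y) :=
      mul_one L ▸ hb.comp (isometry_smul_add he y).lipschitz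
    have hbsupp : ∀ s ∉ Ioo (s₀ - 2 * ρ) (s₀ + 2 * ρ), b (s • e + y) = 0 := fun s hs => by
      have hs' : 2 * ρ ≤ |s - s₀| := by
        by_contra! hlt
        exact hs ⟨by linarith [(abs_lt.1 hlt).1], by linarith [(abs_lt.1 hlt).2]⟩
      refine hsupp _ fun hmem => ?_
      linarith [dist_triangle_right (s • e + y) (s₀ • e + y) ξ₀, hdist s, Metric.mem_ball.1 hmem]
    have hlen : s₀ + 2 * ρ - (s₀ - 2 * ρ) = 4 * ρ := by ring
    refine ⟨integrable_mul_resolvent hφ.continuousOn hbline.continuous hbsupp hζ, fun x => ?_⟩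
    have hbound := hφ.norm_fourier_mul_resolvent_le (by linarith) hbline hbsupp hζ x
    rw [hlen] at hbound
    exact hbound.trans (le_max_left _ _)
  · have hb₀ (s : ℝ) : b (s • e + y) = 0 := hsupp _ fun h => hmeet ⟨s, h⟩
    simp only [hb₀, ofReal_zero, zero_mul]
    exact ⟨integrable_zero _ _ _, fun x =>
      (norm_fourier_le_integral_norm _ x).trans (by simp)⟩

end LocalizedResolvent

section HomogeneousSymbol

/-- A continuous symbol `p`, homogeneous of degree `m`, positive and twice continuously
differentiable away from the origin. -/
structure IsHomogeneousSymbol {E : Type*} [NormedAddCommGroup E] [NormedSpace ℝ E] (m : ℝ)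
    (p : E → ℝ) : Prop where
  continuous : Continuous p
  contDiffAt : ∀ ξ, ξ ≠ 0 → ContDiffAt ℝ 2 p ξ
  map_smul : ∀ t : ℝ, 0 < t → ∀ ξ, p (t • ξ) = t ^ m * p ξ
  pos : ∀ ξ, ξ ≠ 0 → 0 < p ξ

namespace IsHomogeneousSymbol

variable {E : Type*} [NormedAddCommGroup E] [NormedSpace ℝ E] {m : ℝ} {p : E → ℝ}

theorem map_zero (hp : IsHomogeneousSymbol m p) (hm : 0 < m) : p 0 = 0 := by
  have h := hp.map_smul 2 two_pos 0
  rw [smul_zero] at h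
  nlinarith [Real.one_lt_rpow one_lt_two hm]

theorem nonneg (hp : IsHomogeneousSymbol m p) (hm : 0 < m) (ξ : E) : 0 ≤ p ξ := by
  rcases eq_or_ne ξ 0 with rfl | hξ
  · exact (hp.map_zero hm).ge
  · exact (hp.pos ξ hξ).le

theorem rpow {k : ℝ} (hp : IsHomogeneousSymbol k p) (hk : 0 < k) (hm : 0 < m) :
    IsHomogeneousSymbol (k * m) fun ξ => p ξ ^ m where
  continuous := hp.continuous.rpow_const fun _ => .inr hm.le
  contDiffAt ξ hξ := (hp.contDiffAt ξ hξ).rpow_const_of_ne (hp.pos ξ hξ).ne'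
  map_smul t ht ξ := by
    rw [hp.map_smul t ht, Real.mul_rpow (by positivity) (hp.nonneg hk ξ), ← Real.rpow_mul ht.le]
  pos ξ hξ := Real.rpow_pos_of_pos (hp.pos ξ hξ) m

theorem fderiv_smul (hp : IsHomogeneousSymbol m p) {t : ℝ} (ht : 0 < t) (ξ : E) :
    fderiv ℝ p (t • ξ) = t ^ (m - 1) • fderiv ℝ p ξ := by
  have hscale : (fun ξ => p (t • ξ)) = t ^ m • p := funext (hp.map_smul t ht)
  have hchain := fderiv_comp_smul (𝕜 := ℝ) (f := p) (x := ξ) t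
  rw [hscale, fderiv_const_smul_field, Pi.smul_apply] at hchain
  rw [Real.rpow_sub_one ht.ne', div_eq_inv_mul, mul_smul, hchain, inv_smul_smul₀ ht.ne']

theorem fderiv_apply_self (hp : IsHomogeneousSymbol m p) {ξ : E} (hξ : ξ ≠ 0) :
    fderiv ℝ p ξ ξ = m * p ξ := by
  have hradial : HasDerivAt (fun t : ℝ => p (t • ξ)) (fderiv ℝ p ξ ξ) 1 := by
    have hdiff : DifferentiableAt ℝ p ((1 : ℝ) • ξ + 0) := by
      simpa using (hp.contDiffAt ξ hξ).differentiableAt (by simp)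
    simpa using hasDerivAt_comp_smul_add hdiff
  have hpow : HasDerivAt (fun t : ℝ => t ^ m * p ξ) (m * p ξ) 1 := by
    simpa using (Real.hasDerivAt_rpow_const (x := 1) (p := m) (.inl one_ne_zero)).mul_const (p ξ)
  refine hradial.unique (hpow.congr_of_eventuallyEq ?_)
  filter_upwards [lt_mem_nhds zero_lt_one] with t ht
  exact hp.map_smul t ht ξ

theorem fderiv_ne_zero (hp : IsHomogeneousSymbol m p) (hm : m ≠ 0) {ξ : E} (hξ : ξ ≠ 0) :
    fderiv ℝ p ξ ≠ 0 := fun h =>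
  mul_ne_zero hm (hp.pos ξ hξ).ne' (by rw [← hp.fderiv_apply_self hξ, h]; rfl)

theorem continuousOn_fderiv (hp : IsHomogeneousSymbol m p) : ContinuousOn (fderiv ℝ p) {0}ᶜ :=
  fun ξ hξ => ((hp.contDiffAt ξ hξ).continuousAt_fderiv (by simp)).continuousWithinAt

variable [FiniteDimensional ℝ E]

theorem exists_norm_mul_norm_fderiv_le (hp : IsHomogeneousSymbol m p) :
    ∃ C, ∀ ξ, ξ ≠ 0 → ‖ξ‖ * ‖fderiv ℝ p ξ‖ ≤ C * p ξ := by
  have hsphere : ∀ η ∈ Metric.sphere (0 : E) 1, η ≠ 0 := fun η hη =>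
    Metric.ne_of_mem_sphere hη one_ne_zero
  obtain ⟨C, hC⟩ := (isCompact_sphere (0 : E) 1).exists_bound_of_continuousOn
    ((hp.continuousOn_fderiv.mono hsphere).norm.div hp.continuous.continuousOn
      fun η hη => (hp.pos η (hsphere η hη)).ne')
  refine ⟨C, fun ξ hξ => ?_⟩
  have hn : 0 < ‖ξ‖ := norm_pos_iff.2 hξ
  obtain ⟨η, hη, hξη⟩ : ∃ η ∈ Metric.sphere (0 : E) 1, ξ = ‖ξ‖ • η :=
    ⟨‖ξ‖⁻¹ • ξ, by simp [norm_smul, hn.ne'], (smul_inv_smul₀ hn.ne' ξ).symm⟩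
  have hη' : ‖fderiv ℝ p η‖ ≤ C * p η :=
    (div_le_iff₀ (hp.pos η (hsphere η hη))).1 ((Real.le_norm_self _).trans (hC η hη))
  calc ‖ξ‖ * ‖fderiv ℝ p ξ‖ = ‖ξ‖ * (‖ξ‖ ^ (m - 1) * ‖fderiv ℝ p η‖) := by
        conv_lhs => rw [hξη, hp.fderiv_smul hn, ← hξη, norm_smul,
          Real.norm_of_nonneg (Real.rpow_nonneg hn.le _)]
    _ = ‖ξ‖ ^ m * ‖fderiv ℝ p η‖ := by
        rw [Real.rpow_sub_one hn.ne']
        field_simp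
    _ ≤ ‖ξ‖ ^ m * (C * p η) := by gcongr
    _ = C * p (‖ξ‖ • η) := by
        rw [hp.map_smul _ hn]
        ring
    _ = C * p ξ := by rw [← hξη]

theorem exists_mul_rpow_norm_le (hp : IsHomogeneousSymbol m p) :
    ∃ c, 0 < c ∧ ∀ ξ, ξ ≠ 0 → c * ‖ξ‖ ^ m ≤ p ξ := by
  obtain ⟨c, hc, hcp⟩ : ∃ c, 0 < c ∧ ∀ η ∈ Metric.sphere (0 : E) 1, c ≤ p η :=
    (isCompact_sphere (0 : E) 1).exists_forall_le' hp.continuous.continuousOn fun η hη =>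
      hp.pos η (Metric.ne_of_mem_sphere hη one_ne_zero)
  refine ⟨c, hc, fun ξ hξ => ?_⟩
  have hn : 0 < ‖ξ‖ := norm_pos_iff.2 hξ
  calc c * ‖ξ‖ ^ m ≤ p (‖ξ‖⁻¹ • ξ) * ‖ξ‖ ^ m := by
        gcongr
        exact hcp _ (by simp [norm_smul, hn.ne'])
    _ = p ξ := by rw [mul_comm, ← hp.map_smul _ hn, smul_inv_smul₀ hn.ne']

theorem isCompact_shell (hp : IsHomogeneousSymbol m p) (hm : 0 < m) (α β : ℝ) :
    IsCompact (p ⁻¹' Icc α β) := by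
  obtain ⟨c, hc, hcp⟩ := hp.exists_mul_rpow_norm_le
  refine Metric.isCompact_of_isClosed_isBounded (isClosed_Icc.preimage hp.continuous)
    (isBounded_iff_forall_norm_le.2 ⟨(max β 0 / c) ^ m⁻¹, fun ξ hξ => ?_⟩)
  rw [← Real.rpow_le_rpow_iff (norm_nonneg _) (by positivity) hm,
    ← Real.rpow_mul (by positivity), inv_mul_cancel₀ hm.ne', Real.rpow_one, le_div_iff₀' hc]
  rcases eq_or_ne ξ 0 with rfl | hξ₀
  · simp [Real.zero_rpow hm.ne']
  · exact (hcp ξ hξ₀).trans (hξ.2.trans (le_max_left _ _))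

end IsHomogeneousSymbol

end HomogeneousSymbol

section GradientResolvent

variable {E : Type*} [NormedAddCommGroup E] [InnerProductSpace ℝ E] {p : E → ℝ} {ζ : ℂ}
  {m R δ A : ℝ}

/-- The symbol `|p'(ξ)| (ζ - p(ξ))⁻¹` of the resolvent of `p(D)` weighted by the speed `|p'(D)|`. -/
def gradientResolvent (p : E → ℝ) (ζ : ℂ) (ξ : E) : ℂ :=
  (‖fderiv ℝ p ξ‖ : ℂ) * (ζ - p ξ)⁻¹

theorem norm_gradientResolvent (p : E → ℝ) (ζ : ℂ) (ξ : E) :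
    ‖gradientResolvent p ζ ξ‖ = ‖fderiv ℝ p ξ‖ / ‖ζ - p ξ‖ := by
  rw [gradientResolvent, norm_mul, norm_real, norm_norm, norm_inv, div_eq_mul_inv]

theorem dilation_gradientResolvent (hp : IsHomogeneousSymbol m p) (hR : 0 < R) (ζ : ℂ) :
    dilation R (gradientResolvent p ζ) = gradientResolvent p ((R ^ m : ℝ) * ζ) := by
  funext ξ
  obtain ⟨η, rfl⟩ : ∃ η, ξ = R • η := ⟨R⁻¹ • ξ, (smul_inv_smul₀ hR.ne' ξ).symm⟩
  have hRm : ((R ^ m : ℝ) : ℂ) ≠ 0 := mod_cast (Real.rpow_pos_of_pos hR m).ne'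
  rw [dilation, inv_smul_smul₀ hR.ne', gradientResolvent, gradientResolvent, hp.fderiv_smul hR,
    hp.map_smul R hR, norm_smul, Real.norm_of_nonneg (Real.rpow_nonneg hR.le _),
    Real.rpow_sub_one hR.ne']
  push_cast
  rw [← mul_sub, mul_inv]
  field_simp

theorem norm_mul_norm_dilation (R : ℝ) (q : E → ℂ) (ξ : E) :
    ‖ξ‖ * ‖dilation R q ξ‖ = ‖R⁻¹ • ξ‖ * ‖q (R⁻¹ • ξ)‖ := by
  rw [dilation, norm_mul, norm_smul, norm_inv, norm_inv, norm_real]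
  ring

theorem norm_ofReal_mul_le {r : ℝ} (hr : r ∈ Icc 0 1) (z : ℂ) : ‖(r : ℂ) * z‖ ≤ ‖z‖ := by
  rw [norm_mul, norm_real, Real.norm_of_nonneg hr.1]
  exact mul_le_of_le_one_left (norm_nonneg z) hr.2

theorem le_norm_div_mul_norm_sub (hζ : ζ.im ≠ 0) (r : ℝ) :
    r ≤ ‖ζ‖ / |ζ.im| * ‖ζ - r‖ := by
  rw [div_mul_eq_mul_div, le_div_iff₀ (abs_pos.2 hζ)]
  calc r * |ζ.im| ≤ |((ζ - r) * conj ζ).im| := by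
        rw [show ((ζ - r) * conj ζ).im = r * ζ.im by simp; ring, abs_mul]
        gcongr
        exact le_abs_self r
    _ ≤ ‖(ζ - r) * conj ζ‖ := abs_im_le_norm _
    _ = ‖ζ‖ * ‖ζ - r‖ := by rw [norm_mul, RCLike.norm_conj, mul_comm]

theorem le_two_mul_norm_sub (hζ : ‖ζ‖ = 1) {r : ℝ} (hr₀ : 0 ≤ r) (hr : r ∉ Icc (1 / 2) 2) :
    r ≤ 2 * ‖ζ - r‖ := by
  have hle : |1 - r| ≤ ‖ζ - r‖ := by
    simpa [hζ, abs_of_nonneg hr₀] using abs_norm_sub_norm_le ζ (r : ℂ)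
  by_contra! h
  exact hr ⟨by linarith [le_abs_self (1 - r)], by linarith [neg_abs_le (1 - r)]⟩

section Measurable

variable [MeasurableSpace E] [BorelSpace E]

theorem measurable_gradientResolvent (hp : Measurable p) (ζ : ℂ) :
    Measurable (gradientResolvent p ζ) :=
  (measurable_ofReal.comp (measurable_fderiv ℝ p).norm).mul
    ((measurable_ofReal.comp hp).const_sub ζ).inv

theorem measurable_cutoff_mul_gradientResolvent {χ : E → ℝ} (hχ : Measurable χ)
    (hp : Measurable p) (ζ : ℂ) : Measurable fun ξ => χ ξ * gradientResolvent p ζ ξ :=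
  (measurable_ofReal.comp hχ).mul (measurable_gradientResolvent hp ζ)

theorem measurable_dilation {q : E → ℂ} (hq : Measurable q) (R : ℝ) : Measurable (dilation R q) :=
  (hq.comp (measurable_const_smul _)).const_mul _

end Measurable

theorem exists_lipschitzWith_mul_norm_fderiv [FiniteDimensional ℝ E] {χ : E → ℝ} {U : Set E}
    (hp : ContDiffOn ℝ 2 p U) (hU : IsOpen U) (hp' : ∀ ξ ∈ U, fderiv ℝ p ξ ≠ 0)
    (hχ : ContDiff ℝ 1 χ) (hcomp : HasCompactSupport χ) (hsupp : tsupport χ ⊆ U) :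
    ∃ L, LipschitzWith L fun ξ => χ ξ * ‖fderiv ℝ p ξ‖ := by
  refine ContDiff.lipschitzWith_of_hasCompactSupport (𝕂 := ℝ) hcomp.mul_right
    (contMDiff_iff_contDiff.1 (contMDiff_of_tsupport fun ξ hξ => ?_)) one_ne_zero
  have hξ : ξ ∈ U := hsupp (tsupport_mul_subset_left hξ)
  have hfderiv : ContDiffAt ℝ 1 (fderiv ℝ p) ξ :=
    (hp.contDiffAt (hU.mem_nhds hξ)).fderiv_right (by norm_num)
  have hgrad : ContDiffAt ℝ 1 (gradient p) ξ :=
    (InnerProductSpace.toDual ℝ E).symm.contDiff.contDiffAt.comp ξ hfderiv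
  have hnorm : (fun ξ => ‖gradient p ξ‖) = fun ξ => ‖fderiv ℝ p ξ‖ :=
    funext fun ξ => LinearIsometryEquiv.norm_map _ _
  have hgrad' := hgrad.norm ℝ ((LinearIsometryEquiv.map_eq_zero_iff _).not.2 (hp' ξ hξ))
  rw [hnorm] at hgrad'
  exact (hχ.contDiffAt.mul hgrad').contMDiffAt

variable [FiniteDimensional ℝ E]

theorem exists_lineBounded_near (hp : IsHomogeneousSymbol m p) (hm : 0 < m) {ξ₀ : E}
    (hξ₀ : ξ₀ ≠ 0) :
    ∃ e : E, ‖e‖ = 1 ∧ ∃ ρ > 0, ∀ χ : E → ℝ, ContDiff ℝ 1 χ → tsupport χ ⊆ Metric.ball ξ₀ ρ →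
      ∃ K, ∀ ζ : ℂ, ζ.im ≠ 0 → LineBounded e (fun ξ => χ ξ * gradientResolvent p ζ ξ) K := by
  have hn : 0 < ‖ξ₀‖ := norm_pos_iff.2 hξ₀
  have hpos : 0 < fderiv ℝ p ξ₀ (‖ξ₀‖⁻¹ • ξ₀) := by
    rw [map_smul, hp.fderiv_apply_self hξ₀, smul_eq_mul]
    have := hp.pos ξ₀ hξ₀
    positivity
  have he : ‖‖ξ₀‖⁻¹ • ξ₀‖ = 1 := by simp [norm_smul, hn.ne']
  obtain ⟨ρ, hρ, hline⟩ := exists_lineBounded_mul_resolvent (hp.contDiffAt ξ₀ hξ₀) he hpos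
  refine ⟨‖ξ₀‖⁻¹ • ξ₀, he, min ρ ‖ξ₀‖, lt_min hρ hn, fun χ hχ hsupp => ?_⟩
  have hne : ∀ ξ ∈ Metric.ball ξ₀ (min ρ ‖ξ₀‖), ξ ≠ 0 := by
    rintro ξ hξ rfl
    simp at hξ
  obtain ⟨L, hL⟩ := exists_lipschitzWith_mul_norm_fderiv
    (fun ξ hξ => (hp.contDiffAt ξ (hne ξ hξ)).contDiffWithinAt) Metric.isOpen_ball
    (fun ξ hξ => hp.fderiv_ne_zero hm.ne' (hne ξ hξ)) hχ
    ((isCompact_closedBall ξ₀ _).of_isClosed_subset (isClosed_tsupport χ)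
      (hsupp.trans Metric.ball_subset_closedBall)) hsupp
  obtain ⟨K, hK⟩ := hline _ L hL fun ξ hξ => by
    rw [image_eq_zero_of_notMem_tsupport fun h =>
      hξ (Metric.ball_subset_ball (min_le_left _ _) (hsupp h)), zero_mul]
  refine ⟨K, fun ζ hζ => ?_⟩
  simpa only [gradientResolvent, ofReal_mul, mul_assoc] using hK ζ hζ

theorem exists_norm_mul_norm_gradientResolvent_le (hp : IsHomogeneousSymbol m p) (hm : 0 < m) :
    ∃ C, ∀ ζ : ℂ, ζ.im ≠ 0 → ∀ ξ D, p ξ ≤ D * ‖ζ - p ξ‖ →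
      ‖ξ‖ * ‖gradientResolvent p ζ ξ‖ ≤ C * D := by
  obtain ⟨C, hC⟩ := hp.exists_norm_mul_norm_fderiv_le
  refine ⟨max C 0, fun ζ hζ ξ D hD => ?_⟩
  have hpos : 0 < ‖ζ - p ξ‖ := norm_pos_iff.2 (sub_ofReal_ne_zero hζ _)
  have hD₀ : 0 ≤ D := nonneg_of_mul_nonneg_left ((hp.nonneg hm ξ).trans hD) hpos
  rcases eq_or_ne ξ 0 with rfl | hξ
  · rw [norm_zero, zero_mul]
    positivity
  · rw [norm_gradientResolvent, ← mul_div_assoc, div_le_iff₀ hpos, mul_assoc]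
    calc ‖ξ‖ * ‖fderiv ℝ p ξ‖ ≤ C * p ξ := hC ξ hξ
      _ ≤ max C 0 * (D * ‖ζ - p ξ‖) := by
        gcongr
        exacts [hp.nonneg hm ξ, le_max_left _ _]

variable [MeasurableSpace E] [BorelSpace E]

theorem integrable_dilation_cutoff_mul_fourier (hE : 2 ≤ Module.finrank ℝ E)
    (hp : IsHomogeneousSymbol m p) (hm : 0 < m) {χ : E → ℝ} (hχ : Measurable χ)
    (hχ₁ : ∀ ξ, χ ξ ∈ Icc 0 1) (hζ : ζ.im ≠ 0) (R : ℝ) (f : 𝓢(E, ℂ)) :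
    Integrable fun ξ =>
      dilation R (fun ξ => χ ξ * gradientResolvent p ζ ξ) ξ * 𝓕 (f : E → ℂ) ξ := by
  obtain ⟨C, hC⟩ := exists_norm_mul_norm_gradientResolvent_le hp hm
  refine integrable_mul_fourier_schwartz hE (A := C * (‖ζ‖ / |ζ.im|)) (measurable_dilation
    (measurable_cutoff_mul_gradientResolvent hχ hp.continuous.measurable ζ) R) (fun ξ => ?_) f
  calc _ = ‖R⁻¹ • ξ‖ * ‖(χ (R⁻¹ • ξ) : ℂ) * gradientResolvent p ζ (R⁻¹ • ξ)‖ :=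
        norm_mul_norm_dilation R _ ξ
    _ ≤ ‖R⁻¹ • ξ‖ * ‖gradientResolvent p ζ (R⁻¹ • ξ)‖ := by
        gcongr
        exact norm_ofReal_mul_le (hχ₁ _) _
    _ ≤ C * (‖ζ‖ / |ζ.im|) := hC ζ hζ _ _ (le_norm_div_mul_norm_sub hζ _)

theorem exists_cutoff_formBounded (hE : 2 ≤ Module.finrank ℝ E) (hδ : 1 / 2 < δ)
    (hp : IsHomogeneousSymbol m p) (hm : 0 < m) {S : Set E} (hS : IsCompact S)
    (hS₀ : ∀ ξ ∈ S, ξ ≠ 0) :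
    ∃ w : E → ℝ, Measurable w ∧ (∀ ξ, w ξ ∈ Icc 0 1) ∧ (∀ ξ ∈ S, w ξ = 1) ∧
      ∃ C, C ≠ ∞ ∧ ∀ ζ : ℂ, ζ.im ≠ 0 → ∀ R, 0 < R →
        FormBounded δ (dilation R fun ξ => w ξ * gradientResolvent p ζ ξ) C := by
  choose! e he ρ hρ hnear using fun ξ (hξ : ξ ∈ S) => exists_lineBounded_near hp hm (hS₀ ξ hξ)
  obtain ⟨t, htS, hcover⟩ := hS.elim_nhds_subcover (fun ξ => Metric.ball ξ (ρ ξ))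
    fun ξ hξ => Metric.ball_mem_nhds ξ (hρ ξ hξ)
  obtain ⟨χ, hχ⟩ := SmoothPartitionOfUnity.exists_isSubordinate (modelWithCornersSelf ℝ E)
    hS.isClosed (fun i : t => Metric.ball (i : E) (ρ i)) (fun _ => Metric.isOpen_ball)
    (hcover.trans_eq (biUnion_eq_iUnion _ _))
  have hsum (ξ : E) : ∑ᶠ i, χ i ξ = ∑ i, χ i ξ := finsum_eq_sum_of_fintype _
  choose K hK using fun i : t => hnear i (htS i i.2) (χ i)
    ((χ i).contMDiff.contDiff.of_le (by simp)) (hχ i)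
  have hmeas (i : t) : Measurable (χ i) := (χ i).contMDiff.continuous.measurable
  refine ⟨fun ξ => ∑ i, χ i ξ, Finset.measurable_sum _ fun i _ => hmeas i,
    fun ξ => ⟨Finset.sum_nonneg fun i _ => χ.nonneg i ξ, (hsum ξ).symm.trans_le (χ.sum_le_one ξ)⟩,
    fun ξ hξ => (hsum ξ).symm.trans (χ.sum_eq_one hξ),
    ∑ i, ENNReal.ofReal (K i) * bracketConst δ,
    ENNReal.sum_ne_top.2 fun i _ => ENNReal.mul_ne_top ENNReal.ofReal_ne_top
      (bracketConst_ne_top hδ), fun ζ hζ R hR => ?_⟩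
  have hsplit : (dilation R fun ξ => ((∑ i, χ i ξ : ℝ) : ℂ) * gradientResolvent p ζ ξ) =
      ∑ i, dilation R fun ξ => χ i ξ * gradientResolvent p ζ ξ := by
    funext ξ
    simp only [dilation, ofReal_sum, Finset.sum_mul, Finset.mul_sum, Finset.sum_apply]
  rw [hsplit]
  exact FormBounded.sum _ fun i _ => ((hK i ζ hζ).dilate hR).formBounded (he i (htS i i.2)) hδ
    (integrable_dilation_cutoff_mul_fourier hE hp hm (hmeas i)
      (fun ξ => ⟨χ.nonneg i ξ, χ.le_one i ξ⟩) hζ R)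

/-- For `‖ω‖ = 1` the resolvent is singular only near the shell `1 / 2 ≤ p ≤ 2`. -/
theorem exists_formBounded_dilation_gradientResolvent (hE : 2 ≤ Module.finrank ℝ E)
    (hδ : 1 / 2 < δ) (hp : IsHomogeneousSymbol m p) (hm : 0 < m) :
    ∃ C, C ≠ ∞ ∧ ∀ ω : ℂ, ‖ω‖ = 1 → ω.im ≠ 0 → ∀ R, 0 < R →
      FormBounded δ (dilation R (gradientResolvent p ω)) C := by
  have hshell : ∀ ξ ∈ p ⁻¹' Icc (1 / 2) 2, ξ ≠ 0 := by
    rintro ξ hξ rfl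
    rw [mem_preimage, hp.map_zero hm] at hξ
    norm_num at hξ
  obtain ⟨w, hw, hw₁, hwS, C₁, hC₁, hnear⟩ :=
    exists_cutoff_formBounded hE hδ hp hm (hp.isCompact_shell hm _ _) hshell
  obtain ⟨C₂, hC₂⟩ := exists_norm_mul_norm_gradientResolvent_le hp hm
  refine ⟨C₁ + 2 * (ENNReal.ofReal (2 * (C₂ * 2)) * bracketConst δ), by
    finiteness [bracketConst_ne_top hδ], fun ω hω hωim R hR => ?_⟩
  have hfar (ξ : E) : ‖ξ‖ * ‖((1 - w ξ : ℝ) : ℂ) * gradientResolvent p ω ξ‖ ≤ C₂ * 2 := by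
    by_cases hξ : p ξ ∈ Icc (1 / 2) 2
    · have hC₀ : ‖(0 : E)‖ * ‖gradientResolvent p ω 0‖ ≤ C₂ * 2 :=
        hC₂ ω hωim 0 2 (by rw [hp.map_zero hm]; positivity)
      simpa [hwS ξ hξ] using hC₀
    · exact (mul_le_mul_of_nonneg_left (norm_ofReal_mul_le (Icc.one_sub_mem (hw₁ ξ)) _)
        (norm_nonneg ξ)).trans
          (hC₂ ω hωim ξ 2 (le_two_mul_norm_sub hω (hp.nonneg hm ξ) hξ))
  have hsplit : dilation R (gradientResolvent p ω) =
      (dilation R fun ξ => w ξ * gradientResolvent p ω ξ) +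
        dilation R fun ξ => ((1 - w ξ : ℝ) : ℂ) * gradientResolvent p ω ξ := by
    funext ξ
    simp only [dilation, Pi.add_apply]
    push_cast
    ring
  rw [hsplit]
  exact (hnear ω hωim R hR).add (formBounded_of_norm_mul_norm_le hE hδ
    (measurable_dilation (measurable_cutoff_mul_gradientResolvent (hw.const_sub 1)
      hp.continuous.measurable ω) R)
    fun ξ => (norm_mul_norm_dilation R _ ξ).trans_le (hfar _))

theorem exists_formBounded_gradientResolvent (hE : 2 ≤ Module.finrank ℝ E) (hδ : 1 / 2 < δ)
    (hp : IsHomogeneousSymbol m p) (hm : 0 < m) :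
    ∃ C, C ≠ ∞ ∧ ∀ ζ : ℂ, ζ.im ≠ 0 → FormBounded δ (gradientResolvent p ζ) C := by
  obtain ⟨C, hC, hbound⟩ := exists_formBounded_dilation_gradientResolvent hE hδ hp hm
  refine ⟨C, hC, fun ζ hζ => ?_⟩
  have hζ₀ : 0 < ‖ζ‖ := norm_pos_iff.2 fun h => hζ (by rw [h, zero_im])
  obtain ⟨R, hR, hRζ⟩ : ∃ R : ℝ, 0 < R ∧ R ^ m = ‖ζ‖ :=
    ⟨‖ζ‖ ^ m⁻¹, by positivity, Real.rpow_inv_rpow hζ₀.le hm.ne'⟩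
  obtain ⟨ω, hω, hωim, rfl⟩ : ∃ ω : ℂ, ‖ω‖ = 1 ∧ ω.im ≠ 0 ∧ ζ = (R ^ m : ℝ) * ω :=
    ⟨(‖ζ‖ : ℂ)⁻¹ * ζ, by simp [hζ₀.ne'], by simp [← ofReal_inv, hζ, hζ₀.ne'], by
      rw [hRζ, mul_inv_cancel_left₀ (mod_cast hζ₀.ne')]⟩
  rw [← dilation_gradientResolvent hp hR]
  exact hbound ω hω hωim R hR

end GradientResolvent

section Multiplier

variable {n : ℕ} {m δ : ℝ}

theorem FT_eq_smul_fourier (f : EuclideanSpace ℝ (Fin n) → ℂ) (ξ : EuclideanSpace ℝ (Fin n)) :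
    FT n f ξ = ((2 * π) ^ (-(n : ℝ) / 2) : ℝ) • 𝓕 f ((2 * π)⁻¹ • ξ) := by
  rw [FT, Real.fourier_eq']
  congr! 4 with x
  rw [real_inner_smul_right]
  push_cast
  field_simp

theorem IFT_eq_smul_fourierInv (F : EuclideanSpace ℝ (Fin n) → ℂ)
    (x : EuclideanSpace ℝ (Fin n)) :
    IFT n F x = ((2 * π) ^ ((n : ℝ) / 2) : ℝ) • 𝓕⁻ (fun ξ => F ((2 * π) • ξ)) x := by
  have hchange := Measure.integral_comp_smul volume
    (fun ξ => cexp (I * ((⟪x, ξ⟫ : ℝ) : ℂ)) * F ξ) (2 * π)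
  have hconst : (2 * π) ^ (-(n : ℝ) / 2) = (2 * π) ^ ((n : ℝ) / 2) * |((2 * π) ^ n)⁻¹| := by
    rw [abs_of_pos (by positivity), ← Real.rpow_natCast, ← Real.rpow_neg (by positivity),
      ← Real.rpow_add (by positivity)]
    ring_nf
  rw [finrank_euclideanSpace_fin] at hchange
  rw [IFT, hconst, mul_smul, ← hchange, Real.fourierInv_eq']
  congr! 4 with ξ
  rw [real_inner_smul_right, real_inner_comm]
  push_cast
  ring_nf

theorem mult_eq_fourierInv (q f : EuclideanSpace ℝ (Fin n) → ℂ) :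
    mult n q f = 𝓕⁻ fun ξ => q ((2 * π) • ξ) * 𝓕 f ξ := by
  have hc : (2 * π) ^ ((n : ℝ) / 2) * (2 * π) ^ (-(n : ℝ) / 2) = 1 := by
    rw [← Real.rpow_add (by positivity), neg_div, add_neg_cancel, Real.rpow_zero]
  funext x
  rw [mult, IFT_eq_smul_fourierInv, Real.fourierInv_eq, Real.fourierInv_eq, ← integral_smul]
  congr! 2 with ξ
  rw [FT_eq_smul_fourier, inv_smul_smul₀ (by positivity), mul_smul_comm, smul_comm (𝐞 _), smul_smul,
    hc, one_smul]

theorem FormBounded.norm_integral_mult_le {q : EuclideanSpace ℝ (Fin n) → ℂ} {C : ℝ≥0∞}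
    (h : FormBounded δ (dilation (2 * π)⁻¹ q) C) (hC : C ≠ ∞)
    (f g : 𝓢(EuclideanSpace ℝ (Fin n), ℂ)) :
    ‖∫ x, mult n q f x * conj (g x)‖ ≤
      (2 * π)⁻¹ * C.toReal * (weightedNorm δ f).toReal * (weightedNorm δ g).toReal := by
  have hq (ξ : EuclideanSpace ℝ (Fin n)) :
      q ((2 * π) • ξ) * 𝓕 (f : EuclideanSpace ℝ (Fin n) → ℂ) ξ =
        (((2 * π)⁻¹ : ℝ) : ℂ) *
          (dilation (2 * π)⁻¹ q ξ * 𝓕 (f : EuclideanSpace ℝ (Fin n) → ℂ) ξ) := by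
    rw [dilation, inv_inv]
    push_cast
    field_simp
  have hbound := ENNReal.toReal_mono (ENNReal.mul_ne_top hC (ENNReal.mul_ne_top
    (weightedNorm_ne_top δ f) (weightedNorm_ne_top δ g))) (h.enorm_integral_le f g)
  rw [toReal_enorm, ENNReal.toReal_mul, ENNReal.toReal_mul] at hbound
  rw [mult_eq_fourierInv, funext hq,
    ← integral_mul_conj_fourier ((h.integrable f).const_mul _) g.integrable]
  simp only [mul_assoc (((2 * π)⁻¹ : ℝ) : ℂ)]
  rw [integral_const_mul, norm_mul, norm_real, Real.norm_of_nonneg (by positivity), mul_assoc,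
    mul_assoc]
  gcongr

theorem resolvent_gradient_symbol_general (hn : 2 ≤ n) (hm : 0 < m) (hδ : 1 / 2 < δ)
    {p : EuclideanSpace ℝ (Fin n) → ℝ} (hp : IsHomogeneousSymbol m p) :
    ∃ C > 0, ∀ ζ : ℂ, ζ.im ≠ 0 → ∀ f g : 𝓢(EuclideanSpace ℝ (Fin n), ℂ),
      ‖∫ x, mult n (gradientResolvent p ζ) f x * conj (g x)‖ ≤
        C * (weightedNorm δ f).toReal * (weightedNorm δ g).toReal := by
  obtain ⟨C, hC, hbound⟩ := exists_formBounded_gradientResolvent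
    (hn.trans_eq finrank_euclideanSpace_fin.symm) hδ hp hm
  refine ⟨(2 * π)⁻¹ * C.toReal + 1, by positivity, fun ζ hζ f g => ?_⟩
  have hscaled : FormBounded δ (dilation (2 * π)⁻¹ (gradientResolvent p ζ)) C := by
    rw [dilation_gradientResolvent hp (by positivity)]
    exact hbound _ (by rw [im_ofReal_mul]; positivity)
  refine (hscaled.norm_integral_mult_le hC f g).trans ?_
  gcongr
  exact le_add_of_nonneg_right zero_le_one

theorem isHomogeneousSymbol_one_of_contDiffOn {E : Type*} [NormedAddCommGroup E]
    [NormedSpace ℝ E] {a : E → ℝ} (hcont : Continuous a) (hsmooth : ContDiffOn ℝ 2 a {0}ᶜ)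
    (hhom : ∀ t : ℝ, 0 < t → ∀ ξ, a (t • ξ) = t * a ξ) (hpos : ∀ ξ, ξ ≠ 0 → 0 < a ξ) :
    IsHomogeneousSymbol 1 a where
  continuous := hcont
  contDiffAt _ hξ := hsmooth.contDiffAt (isOpen_compl_singleton.mem_nhds hξ)
  map_smul t ht ξ := by rw [hhom t ht, Real.rpow_one]
  pos := hpos

end Multiplier

theorem resolvent_gradient_symbol (n : ℕ) (hn : 2 ≤ n) (m : ℝ) (hm : 1 < m)
    (δ : ℝ) (hδ : 1 / 2 < δ)
    (a : EuclideanSpace ℝ (Fin n) → ℝ)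
    (ha_cont : Continuous a)
    (ha_smooth : ContDiffOn ℝ (⊤ : ℕ∞) a {(0 : EuclideanSpace ℝ (Fin n))}ᶜ)
    (ha_hom : ∀ t : ℝ, 0 < t → ∀ ξ, a (t • ξ) = t * a ξ)
    (ha_pos : ∀ ξ : EuclideanSpace ℝ (Fin n), ξ ≠ 0 → 0 < a ξ) :
    ∃ C > 0, ∀ ζ : ℂ, ζ.im ≠ 0 → ∀ f g : SchwartzMap (EuclideanSpace ℝ (Fin n)) ℂ,
      ‖∫ x : EuclideanSpace ℝ (Fin n),
          mult n (fun ξ =>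
              ((‖fderiv ℝ (fun ζ' : EuclideanSpace ℝ (Fin n) => a ζ' ^ m) ξ‖ : ℝ) : ℂ) *
                (ζ - ((a ξ ^ m : ℝ) : ℂ))⁻¹)
            (fun y => f y) x * (starRingEnd ℂ) (g x)‖
        ≤ C * (eLpNorm (fun x => ((Real.sqrt (1 + ‖x‖ ^ 2) ^ (δ) : ℝ) : ℂ) * f x) 2 volume).toReal *
            (eLpNorm (fun x => ((Real.sqrt (1 + ‖x‖ ^ 2) ^ (δ) : ℝ) : ℂ) * g x) 2 volume).toReal := by
  have ha : IsHomogeneousSymbol 1 a :=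
    isHomogeneousSymbol_one_of_contDiffOn ha_cont (contDiffOn_infty.1 ha_smooth 2) ha_hom ha_pos
  exact resolvent_gradient_symbol_general hn (by linarith) hδ (ha.rpow one_pos (by linarith))
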